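/- arXiv:2101.07545 — 3 statements merged into one kernel-verified Lean document; each statement's English description precedes it below -/
import Mathlib

section
/- Let H be a real Hilbert space, λ ∈ ℝ, and let (f_h) be a sequence of proper, λ-convex, lower semicontinuous functions f_h : H → (-∞,∞] that Mosco-converges to a proper, λ-convex, lower semicontinuous function f : H → (-∞,∞]. Let x_{h,0}, x_{h,1}, x_0, x_1 ∈ H satisfy x_{h,i} → x_i strongly for i = 0,1 and sup_h |∇f_h|(x_{h,i}) < ∞ for i = 0,1. Then for every γ ∈ C([0,1];H) there exists a sequence γ_h ∈ C([0,1];H) converging uniformly to γ with limsup_h Θ_{f_h,x_{h,0},x_{h,1}}(γ_h) ≤ Θ_{f,x_0,x_1}(γ). -/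
open Filter Topology MeasureTheory Set
open scoped ENNReal RealInnerProductSpace

noncomputable section

attribute [local instance] Classical.propDecidable

variable {H : Type*} [NormedAddCommGroup H] [InnerProductSpace ℝ H] [CompleteSpace H]

/-- `f : H → (-∞,∞]` is proper: not identically `⊤` (and it never takes the value `⊥`). -/
def ProperFn (f : H → EReal) : Prop :=
  (∃ x, f x ≠ ⊤) ∧ ∀ x, f x ≠ ⊥

/-- `f` is `λ`-convex: `x ↦ f x - (λ/2)‖x‖²` is convex, expressed via the perturbed
convexity inequality. -/
def LambdaConvex (lam : ℝ) (f : H → EReal) : Prop :=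
  ∀ x y : H, ∀ t : ℝ, 0 ≤ t → t ≤ 1 →
    f ((1 - t) • x + t • y)
      ≤ ((1 - t : ℝ) : EReal) * f x + ((t : ℝ) : EReal) * f y
        - ((lam / 2 * (t * (1 - t)) * ‖x - y‖ ^ 2 : ℝ) : EReal)

/-- The subdifferential of a `λ`-convex function at `x` (contained in the domain of `f`). -/
def subdiff (lam : ℝ) (f : H → EReal) (x : H) : Set H :=
  {p : H | f x ≠ ⊤ ∧
    ∀ y : H, f x + ((⟪p, y - x⟫ + lam / 2 * ‖y - x‖ ^ 2 : ℝ) : EReal) ≤ f y}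

/-- `∇f(x)`: the element of minimal norm of `∂f(x)` (junk value `0` if there is none). -/
def gradMin (lam : ℝ) (f : H → EReal) (x : H) : H :=
  if h : ∃ p ∈ subdiff lam f x, ∀ q ∈ subdiff lam f x, ‖p‖ ≤ ‖q‖ then h.choose else 0

/-- `|∇f|(x) ∈ [0,∞]`, equal to `+∞` when `∂f(x) = ∅` (in particular when `f x = ⊤`). -/
def gradNorm (lam : ℝ) (f : H → EReal) (x : H) : ℝ≥0∞ :=
  if (subdiff lam f x).Nonempty then ENNReal.ofReal ‖gradMin lam f x‖ else ⊤

/-- The resolvent `J_τ(x)`: the minimizer of `y ↦ f y + ‖y-x‖²/(2τ)` (junk `0` if none). -/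
def Jres (f : H → EReal) (τ : ℝ) (x : H) : H :=
  if h : ∃ y : H, ∀ z : H,
      f y + ((‖y - x‖ ^ 2 / (2 * τ) : ℝ) : EReal)
        ≤ f z + ((‖z - x‖ ^ 2 / (2 * τ) : ℝ) : EReal)
  then h.choose else 0

/-- The Moreau–Yosida regularization `f_τ(x) = min_y (f y + ‖y-x‖²/(2τ))`. -/
def moreau (f : H → EReal) (τ : ℝ) (x : H) : ℝ :=
  (f (Jres f τ x)).toReal + ‖Jres f τ x - x‖ ^ 2 / (2 * τ)

/-- `γ` is absolutely continuous on `[a,b]` with an integrable derivative. -/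
abbrev IsACCurve (a b : ℝ) (γ : ℝ → H) : Prop :=
  ∃ g : ℝ → H, IntegrableOn g (Icc a b) ∧ ∀ t ∈ Icc a b, γ t = γ a + ∫ s in a..t, g s

/-- The action `I_f^{[a,b]}(γ) = ∫_a^b (‖γ̇‖² + |∇f|²(γ)) dt ∈ [0,∞]`, set to `+∞` when `γ`
is not absolutely continuous. -/
def actionFn (lam : ℝ) (f : H → EReal) (a b : ℝ) (γ : ℝ → H) : ℝ≥0∞ :=
  if h : IsACCurve a b γ then
    ∫⁻ t in Ioc a b, (ENNReal.ofReal (‖h.choose t‖ ^ 2) + gradNorm lam f (γ t) ^ 2)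
  else ⊤

/-- `Θ_{f,x₀,x₁}`: the action on `[0,1]` with endpoint constraints. -/
def Theta (lam : ℝ) (f : H → EReal) (x0 x1 : H) (γ : ℝ → H) : ℝ≥0∞ :=
  if γ 0 = x0 ∧ γ 1 = x1 then actionFn lam f 0 1 γ else ⊤

/-- `Γ_δ(x₀,x_δ)`: infimum of the action over curves joining the endpoints. -/
def GammaInf (lam : ℝ) (f : H → EReal) (δ : ℝ) (x0 xδ : H) : ℝ≥0∞ :=
  ⨅ (γ : ℝ → H) (_ : γ 0 = x0 ∧ γ δ = xδ), actionFn lam f 0 δ γ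

/-- Mosco convergence of `fh` to `f`: recovery sequences for the strong topology, and the
`liminf` inequality along weakly convergent sequences. -/
def Mosco (fh : ℕ → H → EReal) (f : H → EReal) : Prop :=
  (∀ x : H, ∃ xh : ℕ → H, Tendsto xh atTop (𝓝 x) ∧
      Filter.limsup (fun h => fh h (xh h)) atTop ≤ f x) ∧
  (∀ (xh : ℕ → H) (x : H),
      (∀ p : H, Tendsto (fun h => ⟪xh h, p⟫) atTop (𝓝 ⟪x, p⟫)) →
      f x ≤ Filter.liminf (fun h => fh h (xh h)) atTop)

set_option linter.unusedSectionVars false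

theorem gl_subdiff_real {lam : ℝ} {f : H → EReal} (hp : ProperFn f) {p x : H}
    (h : p ∈ subdiff lam f x) : ∃ a : ℝ, f x = a ∧ ∀ (y : H) (b : ℝ), f y = b →
      a + (⟪p, y - x⟫ + lam / 2 * ‖y - x‖ ^ 2) ≤ b := by
  obtain ⟨h1, h2⟩ := h
  refine ⟨(f x).toReal, (EReal.coe_toReal h1 (hp.2 x)).symm, fun y b hb => ?_⟩
  have := h2 y
  rw [hb, ← EReal.coe_toReal h1 (hp.2 x)] at this
  exact_mod_cast this

theorem gl_subdiff_of_real {lam : ℝ} {f : H → EReal} (hp : ProperFn f) {p x : H} {a : ℝ}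
    (ha : f x = a) (h : ∀ (y : H) (b : ℝ), f y = b →
      a + (⟪p, y - x⟫ + lam / 2 * ‖y - x‖ ^ 2) ≤ b) : p ∈ subdiff lam f x := by
  refine ⟨by rw [ha]; exact EReal.coe_ne_top a, fun y => ?_⟩
  by_cases hy : f y = ⊤
  · rw [hy]; exact le_top
  · have := h y (f y).toReal (EReal.coe_toReal hy (hp.2 y)).symm
    rw [← EReal.coe_toReal hy (hp.2 y), ha]
    exact_mod_cast this

theorem gl_monotone {lam : ℝ} {f : H → EReal} (hp : ProperFn f) {p q x y : H}
    (h : p ∈ subdiff lam f x) (h' : q ∈ subdiff lam f y) :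
    lam * ‖x - y‖ ^ 2 ≤ ⟪p - q, x - y⟫ := by
  obtain ⟨a, ha, h1⟩ := gl_subdiff_real hp h
  obtain ⟨b, hb, h2⟩ := gl_subdiff_real hp h'
  have e1 := h1 y b hb
  have e2 := h2 x a ha
  rw [← neg_sub x y, inner_neg_right, norm_neg] at e1
  rw [inner_sub_left]
  linarith

theorem gl_resolvent_lip {lam : ℝ} {f : H → EReal} (hp : ProperFn f) {p q y z : H} {τ : ℝ}
    (hτ : 0 < τ) (h : p ∈ subdiff lam f y) (h' : q ∈ subdiff lam f z) :
    (1 + lam * τ) * ‖y - z‖ ≤ ‖(y + τ • p) - (z + τ • q)‖ := by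
  have hm := gl_monotone hp h h'
  have e : (y + τ • p) - (z + τ • q) = (y - z) + τ • (p - q) := by
    rw [smul_sub]; abel
  have h3 : (1 + lam * τ) * ‖y - z‖ ^ 2 ≤ ⟪(y + τ • p) - (z + τ • q), y - z⟫ := by
    rw [e, inner_add_left, real_inner_self_eq_norm_sq, real_inner_smul_left]
    nlinarith
  have h4 := real_inner_le_norm ((y + τ • p) - (z + τ • q)) (y - z)
  rcases eq_or_lt_of_le (norm_nonneg (y - z)) with h0 | h0
  · rw [← h0]; simp
  · nlinarith

theorem gl_lconv_real {lam : ℝ} {f : H → EReal} (hp : ProperFn f) (hc : LambdaConvex lam f)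
    {x y : H} {a b : ℝ} (ha : f x = a) (hb : f y = b) {t : ℝ} (h0 : 0 ≤ t) (h1 : t ≤ 1) :
    ∃ c : ℝ, f ((1 - t) • x + t • y) = c ∧
      c ≤ (1 - t) * a + t * b - lam / 2 * (t * (1 - t)) * ‖x - y‖ ^ 2 := by
  have := hc x y t h0 h1
  rw [ha, hb] at this
  have h2 : f ((1 - t) • x + t • y) ≤
    (((1 - t) * a + t * b - lam / 2 * (t * (1 - t)) * ‖x - y‖ ^ 2 : ℝ) : EReal) := by
    push_cast at this ⊢
    exact this
  have h3 : f ((1 - t) • x + t • y) ≠ ⊤ := fun h => by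
    rw [h] at h2; exact EReal.coe_ne_top _ (top_le_iff.1 h2)
  refine ⟨_, (EReal.coe_toReal h3 (hp.2 _)).symm, ?_⟩
  rw [← EReal.coe_toReal h3 (hp.2 _)] at h2
  exact_mod_cast h2

theorem gl_norm_comb (x y z : H) (t : ℝ) :
    ‖((1 - t) • x + t • y) - z‖ ^ 2 =
      (1 - t) * ‖x - z‖ ^ 2 + t * ‖y - z‖ ^ 2 - t * (1 - t) * ‖x - y‖ ^ 2 := by
  have e1 : ((1 - t) • x + t • y) - z = (1 - t) • (x - z) + t • (y - z) := by
    module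
  have e2 : x - y = (x - z) - (y - z) := by abel
  rw [e1, e2]
  generalize x - z = u
  generalize y - z = v
  rw [norm_add_sq_real, norm_sub_sq_real, norm_smul, norm_smul, real_inner_smul_left,
    real_inner_smul_right, mul_pow, mul_pow]
  simp only [Real.norm_eq_abs, sq_abs]
  ring

/-- Existence for the resolvent. -/
theorem gl_exists_resolvent {lam : ℝ} {f : H → EReal} (hp : ProperFn f)
    (hc : LambdaConvex lam f) (hl : LowerSemicontinuous f) {τ : ℝ} (hτ : 0 < τ)
    (hlt : 0 < 1 + lam * τ) (x : H) : ∃ y : H, τ⁻¹ • (x - y) ∈ subdiff lam f y := by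
  set μ : ℝ := lam + τ⁻¹ with hμ
  have hμ0 : 0 < μ := by
    have : μ = (1 + lam * τ) / τ := by rw [hμ]; field_simp; ring
    rw [this]; positivity
  set Q : H → ℝ := fun y => ‖y - x‖ ^ 2 / (2 * τ) with hQ
  have hQ0 : ∀ y, 0 ≤ Q y := fun y => by positivity
  -- strong convexity of `f + Q`
  have hsc : ∀ (y z : H) (a b : ℝ), f y = a → f z = b → ∀ t : ℝ, 0 ≤ t → t ≤ 1 →
      ∃ c : ℝ, f ((1 - t) • y + t • z) = c ∧
        c + Q ((1 - t) • y + t • z) ≤ (1 - t) * (a + Q y) + t * (b + Q z)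
          - μ / 2 * (t * (1 - t)) * ‖y - z‖ ^ 2 := by
    intro y z a b ha hb t h0 h1
    obtain ⟨c, hc1, hc2⟩ := gl_lconv_real hp hc ha hb h0 h1
    refine ⟨c, hc1, ?_⟩
    simp only [hQ]
    rw [gl_norm_comb y z x t]
    have : ((1 - t) * ‖y - x‖ ^ 2 + t * ‖z - x‖ ^ 2 - t * (1 - t) * ‖y - z‖ ^ 2) / (2 * τ)
      = (1 - t) * (‖y - x‖ ^ 2 / (2 * τ)) + t * (‖z - x‖ ^ 2 / (2 * τ))
        - τ⁻¹ / 2 * (t * (1 - t)) * ‖y - z‖ ^ 2 := by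
      field_simp
    rw [this, hμ]
    linarith
  obtain ⟨x0, hx0⟩ := hp.1
  set a0 : ℝ := (f x0).toReal with ha0
  have hfa0 : f x0 = a0 := (EReal.coe_toReal hx0 (hp.2 x0)).symm
  -- bounded below
  have hbdd : ∃ m : ℝ, ∀ (y : H) (b : ℝ), f y = b → m ≤ b + Q y := by
    have hlx : ∀ᶠ y in 𝓝 x0, ((a0 - 1 : ℝ) : EReal) < f y :=
      hl x0 ((a0 - 1 : ℝ) : EReal) (by
        change ((a0 - 1 : ℝ) : EReal) < f x0
        rw [hfa0]; exact_mod_cast sub_one_lt a0)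
    obtain ⟨r, hr, hball⟩ := Metric.eventually_nhds_iff.1 hlx
    set A : ℝ := 1 + Q x0 with hA
    have hA1 : 1 ≤ A := by have := hQ0 x0; linarith
    have hball' : ∀ (y : H) (b : ℝ), f y = b → ‖y - x0‖ < r → a0 - 1 ≤ b + Q y := by
      intro y b hb hy
      have := hball (by rwa [dist_eq_norm] : dist y x0 < r)
      rw [hb] at this
      have h2 : a0 - 1 < b := by exact_mod_cast this
      have := hQ0 y
      linarith
    refine ⟨a0 - 1 - 4 * A ^ 2 / (r ^ 2 * μ), fun y b hb => ?_⟩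
    have hpos : 0 ≤ 4 * A ^ 2 / (r ^ 2 * μ) := by positivity
    by_cases hy : ‖y - x0‖ < r
    · have := hball' y b hb hy; linarith
    · push Not at hy
      set d := ‖y - x0‖ with hd
      have hd0 : 0 < d := lt_of_lt_of_le hr hy
      set t := r / (2 * d) with ht
      have ht0 : 0 < t := by positivity
      have ht1 : t ≤ 1 / 2 := by
        rw [ht, div_le_iff₀ (by positivity)]; linarith
      obtain ⟨c, hc1, hc2⟩ := hsc x0 y a0 b hfa0 hb t ht0.le (by linarith)
      have hz : ‖((1 - t) • x0 + t • y) - x0‖ < r := by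
        have : ((1 - t) • x0 + t • y) - x0 = t • (y - x0) := by module
        rw [this, norm_smul, Real.norm_eq_abs, abs_of_pos ht0, ← hd, ht]
        have : r / (2 * d) * d = r / 2 := by field_simp
        rw [this]; linarith
      have h5 := hball' _ c hc1 hz
      rw [norm_sub_rev, ← hd] at hc2
      have htd : t * d = r / 2 := by rw [ht]; field_simp
      -- t * (b + Q y) ≥ a0 - 1 - (1-t)(a0 + Q x0) + μ/2 t (1-t) d^2
      have h6 : t * (a0 + Q x0) - A + μ / 4 * t * d ^ 2 ≤ t * (b + Q y) := by
        have : μ / 4 * t * d ^ 2 ≤ μ / 2 * (t * (1 - t)) * d ^ 2 := by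
          have h7 : 0 ≤ μ * t * d ^ 2 := by positivity
          nlinarith
        linarith
      have h8 : A ≤ t * (2 * A * d / r) := by
        have : t * (2 * A * d / r) = A := by rw [ht]; field_simp
        rw [this]
      have h9 : 2 * A * d / r ≤ 4 * A ^ 2 / (r ^ 2 * μ) + μ / 4 * d ^ 2 := by
        have : 4 * A ^ 2 / (r ^ 2 * μ) + μ / 4 * d ^ 2 - 2 * A * d / r
          = (4 * A - μ * d * r) ^ 2 / (4 * r ^ 2 * μ) := by
          field_simp; ring
        have h10 : 0 ≤ (4 * A - μ * d * r) ^ 2 / (4 * r ^ 2 * μ) := by positivity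
        linarith
      have h11 : t * (a0 + Q x0 - 4 * A ^ 2 / (r ^ 2 * μ)) ≤ t * (b + Q y) := by
        have := mul_le_mul_of_nonneg_left h9 ht0.le
        nlinarith
      have := le_of_mul_le_mul_left h11 ht0
      have := hQ0 x0
      linarith
  obtain ⟨m0, hm0⟩ := hbdd
  set S : Set ℝ := {v | ∃ (y : H) (b : ℝ), f y = b ∧ v = b + Q y} with hS
  have hSne : S.Nonempty := ⟨_, x0, a0, hfa0, rfl⟩
  have hSb : BddBelow S := ⟨m0, by rintro v ⟨y, b, hb, rfl⟩; exact hm0 y b hb⟩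
  set m := sInf S with hm
  have hmle : ∀ (y : H) (b : ℝ), f y = b → m ≤ b + Q y :=
    fun y b hb => csInf_le hSb ⟨y, b, hb, rfl⟩
  have hex : ∀ n : ℕ, ∃ (y : H) (b : ℝ), f y = b ∧ b + Q y < m + 1 / ((n : ℝ) + 1) := by
    intro n
    obtain ⟨v, ⟨y, b, hb, rfl⟩, hv⟩ := exists_lt_of_csInf_lt hSne
      (lt_add_of_pos_right m (by positivity : (0 : ℝ) < 1 / ((n : ℝ) + 1)))
    exact ⟨y, b, hb, hv⟩
  choose Y B hYB hYm using hex
  have hdist : ∀ n k : ℕ, μ / 8 * ‖Y n - Y k‖ ^ 2 ≤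
      (1 / ((n : ℝ) + 1) + 1 / ((k : ℝ) + 1)) / 2 := by
    intro n k
    obtain ⟨c, hc1, hc2⟩ := hsc (Y n) (Y k) (B n) (B k) (hYB n) (hYB k) (1 / 2) (by norm_num)
      (by norm_num)
    have h1 := hmle _ c hc1
    have h2 := hYm n
    have h3 := hYm k
    nlinarith
  have hcau : CauchySeq Y := by
    rw [Metric.cauchySeq_iff]
    intro ε hε
    obtain ⟨N, hN⟩ := exists_nat_one_div_lt (show (0 : ℝ) < μ / 8 * ε ^ 2 by positivity)
    refine ⟨N, fun n hn k hk => ?_⟩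
    have h1 := hdist n k
    have h2 : 1 / ((n : ℝ) + 1) ≤ 1 / ((N : ℝ) + 1) := Nat.one_div_le_one_div hn
    have h3 : 1 / ((k : ℝ) + 1) ≤ 1 / ((N : ℝ) + 1) := Nat.one_div_le_one_div hk
    have h4 : μ / 8 * ‖Y n - Y k‖ ^ 2 < μ / 8 * ε ^ 2 := by linarith
    have h5 := lt_of_mul_lt_mul_left h4 (by positivity)
    rw [dist_eq_norm]
    exact lt_of_pow_lt_pow_left₀ 2 hε.le h5
  obtain ⟨y, hy⟩ := cauchySeq_tendsto_of_complete hcau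
  have hQy : Tendsto (fun n => Q (Y n)) atTop (𝓝 (Q y)) := by
    have : Continuous Q := by simp only [hQ]; fun_prop
    exact (this.tendsto y).comp hy
  have hinv : Tendsto (fun n : ℕ => m + 1 / ((n : ℝ) + 1)) atTop (𝓝 m) := by
    simpa using tendsto_one_div_add_atTop_nhds_zero_nat.const_add m
  -- value at the limit
  have hval : f y ≤ ((m - Q y : ℝ) : EReal) := by
    by_contra hcon
    push Not at hcon
    obtain ⟨c, hc1, hc2⟩ := EReal.lt_iff_exists_real_btwn.1 hcon
    have hc1' : m - Q y < c := by exact_mod_cast hc1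
    have hev : ∀ᶠ n in atTop, (c : EReal) < f (Y n) := hy.eventually (hl y c hc2)
    have h3 : ∀ᶠ n in atTop, c + Q (Y n) ≤ m + 1 / ((n : ℝ) + 1) := by
      filter_upwards [hev] with n hn
      rw [hYB n] at hn
      have : c < B n := by exact_mod_cast hn
      have := hYm n
      linarith
    have := le_of_tendsto_of_tendsto (hQy.const_add c) hinv h3
    linarith
  have hyt : f y ≠ ⊤ := fun h => by
    rw [h] at hval; exact EReal.coe_ne_top _ (top_le_iff.1 hval)
  set b := (f y).toReal with hb
  have hfy : f y = b := (EReal.coe_toReal hyt (hp.2 y)).symm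
  have hbm : b + Q y ≤ m := by
    rw [hfy] at hval
    have : b ≤ m - Q y := by exact_mod_cast hval
    linarith
  refine ⟨y, gl_subdiff_of_real hp hfy fun z c hz => ?_⟩
  have hstrong : b + Q y + μ / 2 * ‖y - z‖ ^ 2 ≤ c + Q z := by
    have hev : ∀ᶠ t : ℝ in 𝓝[>] 0, b + Q y + μ / 2 * (1 - t) * ‖y - z‖ ^ 2 ≤ c + Q z := by
      have : Ioo (0 : ℝ) 1 ∈ 𝓝[>] (0 : ℝ) := Ioo_mem_nhdsGT one_pos
      filter_upwards [this] with t ht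
      obtain ⟨e, he1, he2⟩ := hsc y z b c hfy hz t ht.1.le ht.2.le
      have h1 := hmle _ e he1
      have h2 : t * (b + Q y + μ / 2 * (1 - t) * ‖y - z‖ ^ 2) ≤ t * (c + Q z) := by nlinarith
      exact le_of_mul_le_mul_left h2 ht.1
    have hlim : Tendsto (fun t : ℝ => b + Q y + μ / 2 * (1 - t) * ‖y - z‖ ^ 2) (𝓝[>] 0)
        (𝓝 (b + Q y + μ / 2 * (1 - 0) * ‖y - z‖ ^ 2)) := by
      apply Tendsto.mono_left _ nhdsWithin_le_nhds
      apply Continuous.tendsto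
      fun_prop
    have := le_of_tendsto hlim hev
    simpa using this
  have e1 : Q z = Q y + ‖z - y‖ ^ 2 / (2 * τ) - ⟪τ⁻¹ • (x - y), z - y⟫ := by
    simp only [hQ]
    have : z - x = (z - y) - (x - y) := by abel
    rw [this, norm_sub_sq_real, real_inner_smul_left, real_inner_comm, norm_sub_rev y x]
    field_simp
    ring
  rw [e1, norm_sub_rev y z, hμ] at hstrong
  have e2 : (lam + τ⁻¹) / 2 * ‖z - y‖ ^ 2 = lam / 2 * ‖z - y‖ ^ 2 + ‖z - y‖ ^ 2 / (2 * τ) := by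
    field_simp
  linarith

theorem gl_gradNorm_le {lam : ℝ} {f : H → EReal} {p x : H} (h : p ∈ subdiff lam f x) :
    gradNorm lam f x ≤ ENNReal.ofReal ‖p‖ := by
  unfold gradNorm
  rw [if_pos ⟨p, h⟩]
  apply ENNReal.ofReal_le_ofReal
  unfold gradMin
  split_ifs with hh
  · exact hh.choose_spec.2 p h
  · simp

theorem gl_exists_grad {lam : ℝ} {f : H → EReal} (hp : ProperFn f) {x : H}
    (h : gradNorm lam f x ≠ ⊤) : ∃ p ∈ subdiff lam f x, ENNReal.ofReal ‖p‖ = gradNorm lam f x := by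
  have hne : (subdiff lam f x).Nonempty := by
    by_contra hcon
    exact h (by unfold gradNorm; rw [if_neg hcon])
  have hex : ∃ p ∈ subdiff lam f x, ∀ q ∈ subdiff lam f x, ‖p‖ ≤ ‖q‖ := by
    obtain ⟨p0, hp0⟩ := hne
    obtain ⟨a, ha, -⟩ := gl_subdiff_real hp hp0
    have hset : subdiff lam f x = ⋂ (y : H) (b : ℝ) (_ : f y = b),
        {p : H | ⟪y - x, p⟫ ≤ b - a - lam / 2 * ‖y - x‖ ^ 2} := by
      ext p
      simp only [mem_iInter, mem_ofPred_eq]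
      constructor
      · intro hpm y b hb
        obtain ⟨a', ha', h2⟩ := gl_subdiff_real hp hpm
        have : a' = a := by rw [ha] at ha'; exact_mod_cast ha'.symm
        subst this
        have := h2 y b hb
        rw [real_inner_comm]; linarith
      · intro hh
        refine gl_subdiff_of_real hp ha fun y b hb => ?_
        have := hh y b hb
        rw [real_inner_comm] at this; linarith
    have hclosed : IsClosed (subdiff lam f x) := by
      rw [hset]
      refine isClosed_iInter fun y => isClosed_iInter fun b => isClosed_iInter fun _ => ?_
      exact isClosed_le (by fun_prop) continuous_const
    have hconv : Convex ℝ (subdiff lam f x) := by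
      rw [hset]
      refine convex_iInter fun y => convex_iInter fun b => convex_iInter fun _ => ?_
      exact convex_halfSpace_le (innerSL ℝ (y - x)).toLinearMap.isLinear _
    obtain ⟨v, hv, hv2⟩ := exists_norm_eq_iInf_of_complete_convex ⟨p0, hp0⟩
      hclosed.isComplete hconv 0
    refine ⟨v, hv, fun q hq => ?_⟩
    rw [zero_sub, norm_neg] at hv2
    rw [hv2]
    have := ciInf_le (⟨0, by rintro _ ⟨w, rfl⟩; exact norm_nonneg _⟩ :
      BddBelow (range fun w : subdiff lam f x => ‖(0 : H) - w‖)) ⟨q, hq⟩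
    simpa using this
  unfold gradNorm
  rw [if_pos hne]
  unfold gradMin
  rw [dif_pos hex]
  exact ⟨hex.choose, hex.choose_spec.1, rfl⟩


theorem gl_weak_compact {E : Type*} [NormedAddCommGroup E] [InnerProductSpace ℝ E]
    [CompleteSpace E] (x : ℕ → E) (R : ℝ) (hR : ∀ n, ‖x n‖ ≤ R) :
    ∃ (z : E) (φ : ℕ → ℕ), StrictMono φ ∧ ‖z‖ ≤ R ∧
      ∀ p : E, Tendsto (fun k => ⟪x (φ k), p⟫) atTop (𝓝 ⟪z, p⟫) := by
  set M : Submodule ℝ E := (Submodule.span ℝ (range x)).topologicalClosure with hM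
  have hsep : TopologicalSpace.IsSeparable (M : Set E) := by
    have h1 : TopologicalSpace.IsSeparable (range x) := (countable_range x).isSeparable
    have h2 := (h1.span (R := ℝ)).closure
    simpa [hM, Submodule.topologicalClosure_coe] using h2
  have : TopologicalSpace.SeparableSpace M := hsep.separableSpace
  have : CompleteSpace M := by
    have : IsClosed (M : Set E) := Submodule.isClosed_topologicalClosure _
    exact this.completeSpace_coe
  have hmem : ∀ n, x n ∈ M := fun n =>
    Submodule.le_topologicalClosure _ (Submodule.subset_span ⟨n, rfl⟩)
  let X : ℕ → M := fun n => ⟨x n, hmem n⟩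
  let Φ : ℕ → WeakDual ℝ M := fun n =>
    StrongDual.toWeakDual (InnerProductSpace.toDual ℝ M (X n))
  have hball := WeakDual.isSeqCompact_closedBall ℝ M (0 : StrongDual ℝ M) R
  have hΦ : ∀ n, Φ n ∈ (WeakDual.toStrongDual ⁻¹' Metric.closedBall (0 : StrongDual ℝ M) R) := by
    intro n
    have : ‖InnerProductSpace.toDual ℝ M (X n)‖ ≤ R := by
      rw [LinearIsometryEquiv.norm_map]; exact hR n
    exact mem_closedBall_zero_iff.2 this
  obtain ⟨ψ, hψ, φ, hφ, hlim⟩ := hball hΦ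
  set z : M := (InnerProductSpace.toDual ℝ M).symm (WeakDual.toStrongDual ψ) with hz
  refine ⟨z, φ, hφ, ?_, fun p => ?_⟩
  · have h1 : ‖WeakDual.toStrongDual ψ‖ ≤ R := by simpa using hψ
    have h2 : ‖z‖ ≤ R := by rw [hz, LinearIsometryEquiv.norm_map]; exact h1
    exact h2
  · have key : ∀ w : M, ⟪(w : E), p⟫ = ⟪w, M.orthogonalProjectionOnto p⟫ := by
      intro w
      exact (Submodule.inner_orthogonalProjectionOnto_eq_of_mem_left w p).symm
    have h3 := ((WeakDual.eval_continuous (M.orthogonalProjectionOnto p)).tendsto ψ).comp hlim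
    rw [key z]
    have h4 : ⟪z, M.orthogonalProjectionOnto p⟫ = ψ (M.orthogonalProjectionOnto p) := by
      rw [hz, InnerProductSpace.toDual_symm_apply]; rfl
    rw [h4]
    refine h3.congr fun k => ?_
    have := key (X (φ k))
    exact this.symm

theorem gl_mosco_subseq {fh : ℕ → H → EReal} {f : H → EReal} (hM : Mosco fh f)
    {φ : ℕ → ℕ} (hφ : StrictMono φ) {y : ℕ → H} {z : H}
    (hw : ∀ p : H, Tendsto (fun k => ⟪y k, p⟫) atTop (𝓝 ⟪z, p⟫)) {c : EReal} (hc : c < f z) :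
    ∀ᶠ k in atTop, c < fh (φ k) (y k) := by
  let X : ℕ → H := Function.extend φ y (fun _ => z)
  have hX : ∀ k, X (φ k) = y k := fun k => hφ.injective.extend_apply _ _ _
  have hXw : ∀ p : H, Tendsto (fun h => ⟪X h, p⟫) atTop (𝓝 ⟪z, p⟫) := by
    intro p
    rw [Metric.tendsto_atTop]
    intro ε hε
    obtain ⟨N, hN⟩ := Metric.tendsto_atTop.1 (hw p) ε hε
    refine ⟨φ N, fun h hh => ?_⟩
    by_cases hr : ∃ k, φ k = h
    · obtain ⟨k, rfl⟩ := hr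
      rw [hX]
      exact hN k (hφ.le_iff_le.1 hh)
    · have : X h = z := Function.extend_apply' _ _ _ hr
      rw [this]; simpa using hε
  have h1 := lt_of_lt_of_le hc (hM.2 X z hXw)
  have h2 := eventually_lt_of_lt_liminf h1
  filter_upwards [hφ.tendsto_atTop.eventually h2] with k hk
  rwa [hX] at hk

/-- Resolvents converge pointwise. -/
theorem gl_resolvent_tendsto {lam : ℝ} {fh : ℕ → H → EReal} {f : H → EReal}
    (hfp : ∀ h, ProperFn (fh h)) (hp : ProperFn f) (hM : Mosco fh f)
    {τ : ℝ} (hτ : 0 < τ) (hlt : 0 < 1 + lam * τ) (x : H) (yh : ℕ → H) (y : H)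
    (hyh : ∀ h, τ⁻¹ • (x - yh h) ∈ subdiff lam (fh h) (yh h))
    (hy : τ⁻¹ • (x - y) ∈ subdiff lam f y) (R : ℝ) (hR : ∀ h, ‖yh h‖ ≤ R) :
    Tendsto yh atTop (𝓝 y) := by
  obtain ⟨zh, hzh, hzl⟩ := hM.1 y
  obtain ⟨a, ha, hmin⟩ := gl_subdiff_real hp hy
  set μ : ℝ := lam + τ⁻¹ with hμ
  have hμ0 : 0 < μ := by
    have : μ = (1 + lam * τ) / τ := by rw [hμ]; field_simp; ring
    rw [this]; positivity
  -- the strong-convexity form of the resolvent inequality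
  have hform : ∀ v w : H, ⟪τ⁻¹ • (x - v), w - v⟫ + lam / 2 * ‖w - v‖ ^ 2
      = ‖v - x‖ ^ 2 / (2 * τ) - ‖w - x‖ ^ 2 / (2 * τ) + μ / 2 * ‖w - v‖ ^ 2 := by
    intro v w
    have : w - x = (w - v) - (x - v) := by abel
    rw [this, norm_sub_sq_real (w - v), real_inner_smul_left, real_inner_comm,
      norm_sub_rev v x, hμ]
    field_simp
    ring
  have hsub : ∀ φ : ℕ → ℕ, StrictMono φ → ∀ z : H,
      (∀ p : H, Tendsto (fun k => ⟪yh (φ k), p⟫) atTop (𝓝 ⟪z, p⟫)) →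
      Tendsto (fun k => yh (φ k)) atTop (𝓝 y) := by
    intro φ hφ z hz
    -- lower bound on `f z`
    have hlow : ((a + ‖y - x‖ ^ 2 / (2 * τ) - ‖z - x‖ ^ 2 / (2 * τ) : ℝ) : EReal) ≤ f z := by
      by_cases hzt : f z = ⊤
      · rw [hzt]; exact le_top
      · have h1 := hmin z (f z).toReal (EReal.coe_toReal hzt (hp.2 z)).symm
        rw [hform] at h1
        rw [← EReal.coe_toReal hzt (hp.2 z)]
        have : 0 ≤ μ / 2 * ‖z - y‖ ^ 2 := by positivity
        have h2 : a + ‖y - x‖ ^ 2 / (2 * τ) - ‖z - x‖ ^ 2 / (2 * τ) ≤ (f z).toReal := by linarith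
        exact_mod_cast h2
    have hdiff : Tendsto (fun k => zh (φ k) - yh (φ k)) atTop (𝓝 0) := by
      rw [Metric.tendsto_atTop]
      intro ε hε
      set δ : ℝ := μ / 2 * ε ^ 2 / 4 with hδ
      have hδ0 : 0 < δ := by positivity
      have e1 : ∀ᶠ k in atTop, ((a + ‖y - x‖ ^ 2 / (2 * τ) - ‖z - x‖ ^ 2 / (2 * τ) - δ : ℝ) : EReal)
          < fh (φ k) (yh (φ k)) := by
        apply gl_mosco_subseq hM hφ hz
        refine lt_of_lt_of_le ?_ hlow
        exact_mod_cast sub_lt_self _ hδ0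
      have e2 : ∀ᶠ k in atTop, fh (φ k) (zh (φ k)) < ((a + δ : ℝ) : EReal) := by
        refine hφ.tendsto_atTop.eventually
          (p := fun h => fh h (zh h) < ((a + δ : ℝ) : EReal)) ?_
        refine eventually_lt_of_limsup_lt (lt_of_le_of_lt hzl ?_)
        rw [ha]
        exact_mod_cast lt_add_of_pos_right a hδ0
      have t3 : Tendsto (fun k => ‖zh (φ k) - x‖ ^ 2 / (2 * τ)) atTop
          (𝓝 (‖y - x‖ ^ 2 / (2 * τ))) :=
        (((hzh.comp hφ.tendsto_atTop).sub_const x).norm.pow 2).div_const _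
      have e3 := t3.eventually (gt_mem_nhds (lt_add_of_pos_right _ hδ0))
      have t4 : Tendsto (fun k => 2 * (⟪yh (φ k), z - x⟫ - ⟪z, z - x⟫) / (2 * τ)) atTop
          (𝓝 (2 * (⟪z, z - x⟫ - ⟪z, z - x⟫) / (2 * τ))) :=
        (((hz (z - x)).sub_const _).const_mul 2).div_const _
      rw [sub_self, mul_zero, zero_div] at t4
      have e4 := t4.eventually (lt_mem_nhds (neg_lt_zero.2 hδ0))
      obtain ⟨N, hN⟩ := eventually_atTop.1 (e1.and (e2.and (e3.and e4)))
      refine ⟨N, fun k hk => ?_⟩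
      obtain ⟨h1, h2, h3, h4⟩ := hN k hk
      obtain ⟨b, hb, hbm⟩ := gl_subdiff_real (hfp (φ k)) (hyh (φ k))
      have hzt : fh (φ k) (zh (φ k)) ≠ ⊤ := ne_top_of_lt h2
      set c := (fh (φ k) (zh (φ k))).toReal with hc
      have hcc : fh (φ k) (zh (φ k)) = c := (EReal.coe_toReal hzt ((hfp _).2 _)).symm
      have h5 := hbm _ c hcc
      rw [hform] at h5
      rw [hb] at h1
      rw [hcc] at h2
      have h1' : a + ‖y - x‖ ^ 2 / (2 * τ) - ‖z - x‖ ^ 2 / (2 * τ) - δ < b := by exact_mod_cast h1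
      have h2' : c < a + δ := by exact_mod_cast h2
      have h6 : ‖z - x‖ ^ 2 / (2 * τ) + 2 * (⟪yh (φ k), z - x⟫ - ⟪z, z - x⟫) / (2 * τ)
          ≤ ‖yh (φ k) - x‖ ^ 2 / (2 * τ) := by
        rw [← add_div]
        apply div_le_div_of_nonneg_right _ (by positivity)
        have : yh (φ k) - x = (yh (φ k) - z) + (z - x) := by abel
        rw [this, norm_add_sq_real, inner_sub_left]
        have := sq_nonneg ‖yh (φ k) - z‖
        linarith
      have h7 : μ / 2 * ‖zh (φ k) - yh (φ k)‖ ^ 2 < μ / 2 * ε ^ 2 := by linarith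
      have h8 := lt_of_mul_lt_mul_left h7 (by positivity)
      rw [dist_zero_right]
      exact lt_of_pow_lt_pow_left₀ 2 hε.le h8
    have := (hzh.comp hφ.tendsto_atTop).sub hdiff
    simpa using this
  apply tendsto_of_subseq_tendsto
  intro ns hns
  obtain ⟨φ, hφ, hφ2⟩ := strictMono_subseq_of_tendsto_atTop hns
  obtain ⟨z, ψ, hψ, -, hz⟩ := gl_weak_compact (fun k => yh (ns (φ k))) R (fun k => hR _)
  exact ⟨fun k => φ (ψ k), hsub _ (hφ2.comp hψ) z hz⟩


theorem gl_enorm_sq {E : Type*} [NormedAddCommGroup E] (x : E) :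
    ENNReal.ofReal (‖x‖ ^ 2) = ‖x‖ₑ ^ 2 := by
  rw [ENNReal.ofReal_pow (norm_nonneg x), ofReal_norm]

theorem gl_eLpNorm_sq {μ : Measure ℝ} (F : ℝ → H) :
    eLpNorm F 2 μ ^ 2 = ∫⁻ x, ‖F x‖ₑ ^ 2 ∂μ := by
  have := eLpNorm_nnreal_pow_eq_lintegral (f := F) (μ := μ) (p := 2) (by norm_num)
  simpa using this

theorem gl_deriv_unique {g1 g2 : ℝ → H} (h1 : IntegrableOn g1 (Icc 0 1))
    (h2 : IntegrableOn g2 (Icc 0 1))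
    (h : ∀ t ∈ Icc (0 : ℝ) 1, ∫ s in (0 : ℝ)..t, g1 s = ∫ s in (0 : ℝ)..t, g2 s) :
    ∀ᵐ t ∂(volume.restrict (Ioc (0 : ℝ) 1)), g1 t = g2 t := by
  have i1 : IntervalIntegrable g1 volume 0 1 :=
    (intervalIntegrable_iff_integrableOn_Icc_of_le zero_le_one).2 h1
  have i2 : IntervalIntegrable g2 volume 0 1 :=
    (intervalIntegrable_iff_integrableOn_Icc_of_le zero_le_one).2 h2
  rw [ae_restrict_iff' measurableSet_Ioc]
  have hne : ∀ᵐ x : ℝ, x ≠ 1 := by simp [ae_iff, measure_singleton]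
  filter_upwards [i1.ae_hasDerivAt_integral, i2.ae_hasDerivAt_integral, hne] with x a1 a2 a3 hx
  have hxm : x ∈ uIcc (0 : ℝ) 1 := by
    rw [uIcc_of_le zero_le_one]; exact ⟨hx.1.le, hx.2⟩
  have h0 : (0 : ℝ) ∈ uIcc (0 : ℝ) 1 := by rw [uIcc_of_le zero_le_one]; simp
  have d1 := a1 hxm 0 h0
  have d2 := a2 hxm 0 h0
  have hev : (fun x => ∫ (t : ℝ) in (0 : ℝ)..x, g1 t) =ᶠ[𝓝 x]
      (fun x => ∫ (t : ℝ) in (0 : ℝ)..x, g2 t) := by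
    filter_upwards [Icc_mem_nhds hx.1 (lt_of_le_of_ne hx.2 a3)] with t ht
    exact h t ht
  exact (d1.congr_of_eventuallyEq hev.symm).unique d2

theorem gl_action_eq (lam : ℝ) (f : H → EReal) (γ g : ℝ → H)
    (hg : IntegrableOn g (Icc 0 1)) (hγ : ∀ t ∈ Icc (0 : ℝ) 1, γ t = γ 0 + ∫ s in (0 : ℝ)..t, g s) :
    actionFn lam f 0 1 γ =
      ∫⁻ t in Ioc (0 : ℝ) 1, (‖g t‖ₑ ^ 2 + gradNorm lam f (γ t) ^ 2) := by
  have hAC : IsACCurve 0 1 γ := ⟨g, hg, hγ⟩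
  unfold actionFn
  rw [dif_pos hAC]
  have hs := hAC.choose_spec
  have hae := gl_deriv_unique hs.1 hg (fun t ht => by
    have := (hs.2 t ht).symm.trans (hγ t ht)
    exact add_left_cancel this)
  apply lintegral_congr_ae
  filter_upwards [hae] with t ht
  rw [ht, gl_enorm_sq]

theorem gl_ac_of_diffquot (u : ℝ → H) (hu : Continuous u) (M ε0 : ℝ) (hM : 0 ≤ M) (hε0 : 0 < ε0)
    (h : ∀ ε, 0 < ε → ε ≤ ε0 →
      ∫⁻ s in Ioc (0 : ℝ) 1, ‖u (s + ε) - u s‖ₑ ^ 2 ≤ ENNReal.ofReal (ε ^ 2 * M)) :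
    ∃ g : ℝ → H, IntegrableOn g (Icc 0 1) ∧
      (∀ t ∈ Icc (0 : ℝ) 1, u t = u 0 + ∫ s in (0 : ℝ)..t, g s) ∧
      ∫⁻ t in Ioc (0 : ℝ) 1, ‖g t‖ₑ ^ 2 ≤ ENNReal.ofReal M := by
  set μ : Measure ℝ := volume.restrict (Ioc (0 : ℝ) 1) with hμ
  let e : ℕ → ℝ := fun n => ε0 / ((n : ℝ) + 1)
  have he0 : ∀ n, 0 < e n := fun n => by positivity
  have he1 : ∀ n, e n ≤ ε0 := fun n => by
    apply div_le_self hε0.le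
    have : (0 : ℝ) ≤ n := Nat.cast_nonneg n
    linarith
  have het : Tendsto e atTop (𝓝 0) := by
    have := tendsto_one_div_add_atTop_nhds_zero_nat.const_mul ε0
    rw [mul_zero] at this
    refine this.congr fun n => ?_
    simp only [e]; ring
  let D : ℕ → ℝ → H := fun n s => (e n)⁻¹ • (u (s + e n) - u s)
  have hDc : ∀ n, Continuous (D n) := fun n => by simp only [D]; fun_prop
  have hDm : ∀ n, MemLp (D n) 2 μ := by
    intro n
    obtain ⟨C, hC⟩ := isCompact_Icc.exists_bound_of_continuousOn
      (s := Icc (0 : ℝ) 1) (hDc n).continuousOn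
    refine MemLp.of_bound (hDc n).aestronglyMeasurable C ?_
    rw [hμ, ae_restrict_iff' measurableSet_Ioc]
    exact Eventually.of_forall fun x hx => hC x (Ioc_subset_Icc_self hx)
  let G : ℕ → Lp H 2 μ := fun n => (hDm n).toLp (D n)
  have hGn : ∀ n, ‖G n‖ ≤ √M := by
    intro n
    have h1 : eLpNorm (D n) 2 μ ^ 2 ≤ ENNReal.ofReal M := by
      rw [gl_eLpNorm_sq]
      have h2 := h (e n) (he0 n) (he1 n)
      have h3 : ∀ s, ‖D n s‖ₑ ^ 2 = ENNReal.ofReal ((e n)⁻¹ ^ 2) * ‖u (s + e n) - u s‖ₑ ^ 2 := by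
        intro s
        simp only [D]
        rw [enorm_smul, mul_pow, ← gl_enorm_sq, Real.norm_eq_abs, sq_abs]
      simp_rw [h3]
      rw [lintegral_const_mul' _ _ ENNReal.ofReal_ne_top]
      calc _ ≤ ENNReal.ofReal ((e n)⁻¹ ^ 2) * ENNReal.ofReal (e n ^ 2 * M) := by gcongr
        _ = ENNReal.ofReal M := by
          rw [← ENNReal.ofReal_mul (by positivity)]
          congr 1
          have := (he0 n).ne'
          field_simp
    rw [Lp.norm_toLp]
    apply Real.le_sqrt_of_sq_le
    rw [← ENNReal.toReal_pow]
    exact ENNReal.toReal_le_of_le_ofReal hM h1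
  obtain ⟨F, φ, hφ, hF, hw⟩ := gl_weak_compact G (√M) hGn
  have hFi : IntegrableOn F (Ioc (0 : ℝ) 1) := (Lp.memLp F).integrable one_le_two
  refine ⟨F, (integrableOn_Icc_iff_integrableOn_Ioc (by simp)).2 hFi, fun t ht => ?_, ?_⟩
  · have hres : μ.restrict (Ioc 0 t) = volume.restrict (Ioc 0 t) := by
      rw [hμ, Measure.restrict_restrict measurableSet_Ioc]
      congr 1
      rw [inter_eq_left]
      exact Ioc_subset_Ioc_right ht.2
    -- limit of the integrals
    have hcont : ∀ a b : ℝ, IntervalIntegrable u volume a b := fun a b => hu.intervalIntegrable a b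
    have hlim : Tendsto (fun k => ∫ s in (0 : ℝ)..t, D (φ k) s) atTop (𝓝 (u t - u 0)) := by
      have hd : ∀ x, HasDerivAt (fun x => ∫ s in (0 : ℝ)..x, u s) (u x) x := fun x =>
        intervalIntegral.integral_hasDerivAt_right (hcont 0 x)
          (hu.stronglyMeasurableAtFilter _ _) hu.continuousAt
      have hek : Tendsto (fun k => e (φ k)) atTop (𝓝[≠] 0) :=
        tendsto_nhdsWithin_iff.2 ⟨het.comp hφ.tendsto_atTop,
          Eventually.of_forall fun k => (he0 _).ne'⟩
      have l1 := (hd t).tendsto_slope_zero.comp hek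
      have l2 := (hd 0).tendsto_slope_zero.comp hek
      refine (l1.sub l2).congr fun k => ?_
      simp only [Function.comp, D]
      rw [intervalIntegral.integral_smul, intervalIntegral.integral_sub
        (show IntervalIntegrable (fun x => u (x + e (φ k))) volume 0 t from
          (hu.comp (continuous_add_const _)).intervalIntegrable _ _) (hcont _ _),
        intervalIntegral.integral_comp_add_right (fun s => u s), ← smul_sub]
      congr 1
      rw [← intervalIntegral.integral_interval_sub_left (hcont 0 (t + e (φ k))) (hcont 0 (0 + e (φ k)))]
      simp only [intervalIntegral.integral_same]
      abel
    have hlim2 : u t - u 0 = ∫ s in (0 : ℝ)..t, F s := by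
      apply ext_inner_left ℝ
      intro c
      have hind := hw (indicatorConstLp 2 (measurableSet_Ioc (a := (0 : ℝ)) (b := t))
        (measure_ne_top μ _) c)
      have hl : Tendsto (fun k => ⟪c, ∫ s in (0 : ℝ)..t, D (φ k) s⟫) atTop
          (𝓝 ⟪c, u t - u 0⟫) := tendsto_const_nhds.inner hlim
      refine tendsto_nhds_unique hl ?_
      rw [real_inner_comm, L2.inner_indicatorConstLp_eq_inner_setIntegral, hres] at hind
      rw [intervalIntegral.integral_of_le ht.1]
      refine hind.congr fun k => ?_
      rw [real_inner_comm, L2.inner_indicatorConstLp_eq_inner_setIntegral, hres,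
        intervalIntegral.integral_of_le ht.1]
      congr 1
      rw [← hres]
      exact integral_congr_ae (ae_restrict_of_ae (MemLp.coeFn_toLp (hDm (φ k))))
    rw [← hlim2]; abel
  · rw [← gl_eLpNorm_sq]
    rw [Lp.norm_def] at hF
    have h5 : eLpNorm F 2 μ ≠ ⊤ := Lp.eLpNorm_ne_top F
    have h6 : eLpNorm F 2 μ ≤ ENNReal.ofReal (√M) := by
      rw [← ENNReal.ofReal_toReal h5]
      exact ENNReal.ofReal_le_ofReal hF
    calc eLpNorm F 2 μ ^ 2 ≤ ENNReal.ofReal (√M) ^ 2 := by gcongr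
      _ = ENNReal.ofReal M := by
        rw [← ENNReal.ofReal_pow (Real.sqrt_nonneg _), Real.sq_sqrt hM]

/-- Cauchy-Schwarz on a set. -/
theorem gl_cs {μ : Measure ℝ} (F : ℝ → ℝ≥0∞) (hF : AEMeasurable F μ) :
    (∫⁻ x, F x ∂μ) ^ 2 ≤ μ univ * ∫⁻ x, F x ^ 2 ∂μ := by
  have h := ENNReal.lintegral_mul_le_Lp_mul_Lq μ Real.HolderConjugate.two_two
    (f := fun _ => 1) (g := F) aemeasurable_const hF
  simp only [Pi.mul_apply, one_mul, ENNReal.rpow_two, one_pow, lintegral_one] at h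
  calc (∫⁻ x, F x ∂μ) ^ 2 ≤ (μ univ ^ (1 / (2 : ℝ)) * (∫⁻ x, F x ^ 2 ∂μ) ^ (1 / (2 : ℝ))) ^ 2 := by
        gcongr
    _ = _ := by
      rw [mul_pow, ← ENNReal.rpow_two, ← ENNReal.rpow_two, ← ENNReal.rpow_mul, ← ENNReal.rpow_mul]
      norm_num

/-- Constant extension of a curve. -/
def glExt (γ : ℝ → H) (t : ℝ) : H := γ (max 0 (min t 1))

theorem gl_diffquot_of_ac (γ g : ℝ → H) (hg : IntegrableOn g (Icc 0 1))
    (hγ : ∀ t ∈ Icc (0 : ℝ) 1, γ t = γ 0 + ∫ s in (0 : ℝ)..t, g s) {ε : ℝ} (hε : 0 < ε) :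
    ∫⁻ s in Ioc (0 : ℝ) 1, ‖glExt γ (s + ε) - glExt γ s‖ₑ ^ 2 ≤
      ENNReal.ofReal (ε ^ 2) * ∫⁻ t in Ioc (0 : ℝ) 1, ‖g t‖ₑ ^ 2 := by
  have hgI : IntegrableOn g (Ioc 0 1) := hg.mono_set Ioc_subset_Icc_self
  set m : ℝ → ℝ≥0∞ := (Ioc (0 : ℝ) 1).indicator (fun t => ‖g t‖ₑ ^ 2) with hm
  have hmm : AEMeasurable m volume := by
    rw [hm, aemeasurable_indicator_iff measurableSet_Ioc]
    exact hgI.aestronglyMeasurable.enorm.pow_const 2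
  have hmA : ∫⁻ t, m t = ∫⁻ t in Ioc (0 : ℝ) 1, ‖g t‖ₑ ^ 2 := by
    rw [hm, lintegral_indicator measurableSet_Ioc]
  set m' := hmm.mk m with hm'
  have hm'm : Measurable m' := hmm.measurable_mk
  have hae : m =ᵐ[volume] m' := hmm.ae_eq_mk
  have hpt : ∀ s ∈ Ioc (0 : ℝ) 1, ‖glExt γ (s + ε) - glExt γ s‖ₑ ^ 2 ≤
      ENNReal.ofReal ε * ∫⁻ r in Ioc (0 : ℝ) ε, m' (s + r) := by
    intro s hs
    have e1 : glExt γ s = γ s := by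
      unfold glExt; rw [min_eq_left hs.2, max_eq_right hs.1.le]
    set b := min (s + ε) 1 with hb
    have hsb : s ≤ b := le_min (by linarith) hs.2
    have hb1 : b ≤ 1 := min_le_right _ _
    have hbε : b ≤ s + ε := min_le_left _ _
    have e2 : glExt γ (s + ε) = γ b := by
      unfold glExt; rw [max_eq_right (hs.1.le.trans hsb)]
    have hii : ∀ t ∈ Icc (0 : ℝ) 1, IntervalIntegrable g volume 0 t := fun t ht =>
      (intervalIntegrable_iff_integrableOn_Icc_of_le ht.1).2
        (hg.mono_set (Icc_subset_Icc_right ht.2))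
    have hs' : s ∈ Icc (0 : ℝ) 1 := ⟨hs.1.le, hs.2⟩
    have hb' : b ∈ Icc (0 : ℝ) 1 := ⟨hs.1.le.trans hsb, hb1⟩
    have e3 : γ b - γ s = ∫ r in Ioc s b, g r := by
      rw [hγ b hb', hγ s hs', add_sub_add_left_eq_sub,
        intervalIntegral.integral_interval_sub_left (hii b hb') (hii s hs'),
        intervalIntegral.integral_of_le hsb]
    have hsub : Ioc s b ⊆ Ioc 0 1 := Ioc_subset_Ioc hs.1.le hb1
    rw [e1, e2, e3]
    calc ‖∫ r in Ioc s b, g r‖ₑ ^ 2 ≤ (∫⁻ r in Ioc s b, ‖g r‖ₑ) ^ 2 := by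
          gcongr; exact enorm_integral_le_lintegral_enorm _
      _ ≤ (volume.restrict (Ioc s b)) univ * ∫⁻ r in Ioc s b, ‖g r‖ₑ ^ 2 :=
          gl_cs _ (hgI.mono_set hsub).aestronglyMeasurable.enorm
      _ ≤ ENNReal.ofReal ε * ∫⁻ r in Ioc s b, m r := by
          gcongr ?_ * ?_
          · rw [Measure.restrict_apply_univ, Real.volume_Ioc]
            apply ENNReal.ofReal_le_ofReal; linarith
          · apply le_of_eq
            apply setLIntegral_congr_fun measurableSet_Ioc
            intro r hr
            simp only [hm]
            rw [indicator_of_mem (hsub hr)]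
      _ ≤ ENNReal.ofReal ε * ∫⁻ r in Ioc s (s + ε), m r := by
          gcongr
      _ = ENNReal.ofReal ε * ∫⁻ r in Ioc s (s + ε), m' r := by
          congr 1
          exact lintegral_congr_ae (ae_restrict_of_ae hae)
      _ = ENNReal.ofReal ε * ∫⁻ r in Ioc (0 : ℝ) ε, m' (s + r) := by
          congr 1
          rw [← lintegral_indicator measurableSet_Ioc, ← lintegral_indicator measurableSet_Ioc,
            ← lintegral_add_left_eq_self _ s]
          congr 1
          ext r
          simp only [indicator, mem_Ioc]
          congr 1
          apply propext
          constructor <;> rintro ⟨h1, h2⟩ <;> constructor <;> linarith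
  calc ∫⁻ s in Ioc (0 : ℝ) 1, ‖glExt γ (s + ε) - glExt γ s‖ₑ ^ 2
      ≤ ∫⁻ s in Ioc (0 : ℝ) 1, ENNReal.ofReal ε * ∫⁻ r in Ioc (0 : ℝ) ε, m' (s + r) :=
        setLIntegral_mono' measurableSet_Ioc hpt
    _ = ENNReal.ofReal ε * ∫⁻ s in Ioc (0 : ℝ) 1, ∫⁻ r in Ioc (0 : ℝ) ε, m' (s + r) :=
        lintegral_const_mul' _ _ ENNReal.ofReal_ne_top
    _ = ENNReal.ofReal ε * ∫⁻ r in Ioc (0 : ℝ) ε, ∫⁻ s in Ioc (0 : ℝ) 1, m' (s + r) := by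
        rw [lintegral_lintegral_swap]
        exact (hm'm.comp measurable_add).aemeasurable
    _ ≤ ENNReal.ofReal ε * ∫⁻ r in Ioc (0 : ℝ) ε, ∫⁻ t, m t := by
        refine mul_le_mul' le_rfl (lintegral_mono fun r => ?_)
        change ∫⁻ s in Ioc (0 : ℝ) 1, m' (s + r) ≤ ∫⁻ t, m t
        rw [lintegral_congr_ae hae, ← lintegral_add_right_eq_self m' r]
        exact setLIntegral_le_lintegral _ _
    _ = ENNReal.ofReal (ε ^ 2) * ∫⁻ t in Ioc (0 : ℝ) 1, ‖g t‖ₑ ^ 2 := by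
        rw [setLIntegral_const, Real.volume_Ioc, sub_zero, hmA, pow_two, ENNReal.ofReal_mul hε.le]
        ring


theorem gl_sq_add (a b : ℝ≥0∞) {σ : ℝ} (hσ : 0 < σ) :
    (a + b) ^ 2 ≤ ENNReal.ofReal (1 + σ) * a ^ 2 + ENNReal.ofReal (1 + σ⁻¹) * b ^ 2 := by
  have h1 : ENNReal.ofReal (1 + σ) ≠ 0 := by
    rw [Ne, ENNReal.ofReal_eq_zero]; push Not; positivity
  have h2 : ENNReal.ofReal (1 + σ⁻¹) ≠ 0 := by
    rw [Ne, ENNReal.ofReal_eq_zero]; push Not; positivity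
  by_cases ha : a = ⊤
  · subst ha; simp [ENNReal.mul_top h1]
  by_cases hb : b = ⊤
  · subst hb; simp [ENNReal.mul_top h2]
  lift a to NNReal using ha
  lift b to NNReal using hb
  have e1 : (a : ℝ≥0∞) = ENNReal.ofReal (a : ℝ) := (ENNReal.ofReal_coe_nnreal).symm
  have e2 : (b : ℝ≥0∞) = ENNReal.ofReal (b : ℝ) := (ENNReal.ofReal_coe_nnreal).symm
  have ha0 : (0 : ℝ) ≤ a := a.2
  have hb0 : (0 : ℝ) ≤ b := b.2
  rw [e1, e2, ← ENNReal.ofReal_add ha0 hb0, ← ENNReal.ofReal_pow (by positivity),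
    ← ENNReal.ofReal_pow ha0, ← ENNReal.ofReal_pow hb0, ← ENNReal.ofReal_mul (by positivity),
    ← ENNReal.ofReal_mul (by positivity), ← ENNReal.ofReal_add (by positivity) (by positivity)]
  apply ENNReal.ofReal_le_ofReal
  have h3 : (1 + σ) * (a : ℝ) ^ 2 + (1 + σ⁻¹) * (b : ℝ) ^ 2 - ((a : ℝ) + b) ^ 2
      = σ⁻¹ * (σ * a - b) ^ 2 := by
    field_simp; ring
  have : 0 ≤ σ⁻¹ * (σ * a - b) ^ 2 := by positivity
  linarith

/-- The cut-off profile. -/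
def glW (τ s : ℝ) : ℝ := max 0 (1 - s / τ)

theorem gl_W_lip {τ : ℝ} (hτ : 0 < τ) (s t : ℝ) : |glW τ s - glW τ t| ≤ |s - t| / τ := by
  unfold glW
  calc |max 0 (1 - s / τ) - max 0 (1 - t / τ)| ≤ |(1 - s / τ) - (1 - t / τ)| := by
        simpa using abs_max_sub_max_le_max 0 (1 - s / τ) 0 (1 - t / τ)
    _ = |s - t| / τ := by
        rw [show (1 - s / τ) - (1 - t / τ) = -((s - t) / τ) by ring, abs_neg, abs_div,
          abs_of_pos hτ]

theorem gl_W_zero {τ s : ℝ} (hτ : 0 < τ) (h : τ ≤ s) : glW τ s = 0 := by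
  unfold glW
  apply max_eq_left
  have : 1 ≤ s / τ := (one_le_div hτ).2 h
  linarith

theorem gl_W_bd {τ s : ℝ} (hτ : 0 < τ) (h : 0 ≤ s) : |glW τ s| ≤ 1 := by
  unfold glW
  rw [abs_of_nonneg (le_max_left _ _)]
  apply max_le zero_le_one
  have : 0 ≤ s / τ := by positivity
  linarith

def glC (τ : ℝ) (e0 e1 : H) (s : ℝ) : H := glW τ s • e0 + glW τ (1 - s) • e1

def glE (τ : ℝ) : Set ℝ := Icc 0 τ ∪ Icc (1 - 2 * τ) 1

theorem gl_E_meas (τ : ℝ) : MeasurableSet (glE τ) := measurableSet_Icc.union measurableSet_Icc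

theorem gl_E_vol {τ : ℝ} (hτ : 0 < τ) : volume (glE τ) ≤ ENNReal.ofReal (3 * τ) := by
  unfold glE
  refine (measure_union_le _ _).trans ?_
  rw [Real.volume_Icc, Real.volume_Icc, ← ENNReal.ofReal_add (by linarith) (by linarith)]
  apply ENNReal.ofReal_le_ofReal; linarith

theorem gl_C_cont (τ : ℝ) (e0 e1 : H) : Continuous (glC τ e0 e1) := by
  unfold glC glW; fun_prop

theorem gl_C_bd {τ C1 : ℝ} (hτ : 0 < τ) {e0 e1 : H} (h0 : ‖e0‖ ≤ τ * C1)
    (h1 : ‖e1‖ ≤ τ * C1) {s : ℝ} (hs : s ∈ Icc (0 : ℝ) 1) : ‖glC τ e0 e1 s‖ ≤ 2 * (τ * C1) := by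
  unfold glC
  have b0 := gl_W_bd hτ hs.1
  have b1 := gl_W_bd hτ (sub_nonneg.2 hs.2)
  calc _ ≤ ‖glW τ s • e0‖ + ‖glW τ (1 - s) • e1‖ := norm_add_le _ _
    _ = |glW τ s| * ‖e0‖ + |glW τ (1 - s)| * ‖e1‖ := by
        rw [norm_smul, norm_smul, Real.norm_eq_abs, Real.norm_eq_abs]
    _ ≤ 1 * ‖e0‖ + 1 * ‖e1‖ := by gcongr
    _ ≤ _ := by linarith

theorem gl_C_zero {τ : ℝ} (hτ : 0 < τ) (e0 e1 : H) {s ε : ℝ} (h1 : τ ≤ s)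
    (hs : s ≤ 1 - 2 * τ) (hε : 0 ≤ ε) (hε2 : ε ≤ τ) : glC τ e0 e1 (s + ε) = 0 := by
  unfold glC
  rw [gl_W_zero hτ (by linarith), gl_W_zero hτ (by linarith)]; simp

theorem gl_C_lip {τ C1 : ℝ} (hτ : 0 < τ) {e0 e1 : H} (h0 : ‖e0‖ ≤ τ * C1)
    (h1 : ‖e1‖ ≤ τ * C1) (s ε : ℝ) (hε : 0 < ε) :
    ‖glC τ e0 e1 (s + ε) - glC τ e0 e1 s‖ ≤ 2 * C1 * ε := by
  have e : glC τ e0 e1 (s + ε) - glC τ e0 e1 s =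
      (glW τ (s + ε) - glW τ s) • e0 + (glW τ (1 - (s + ε)) - glW τ (1 - s)) • e1 := by
    unfold glC; module
  have b0 := gl_W_lip hτ (s + ε) s
  have b1 := gl_W_lip hτ (1 - (s + ε)) (1 - s)
  rw [show s + ε - s = ε by ring, abs_of_pos hε] at b0
  rw [show 1 - (s + ε) - (1 - s) = -ε by ring, abs_neg, abs_of_pos hε] at b1
  rw [e]
  calc _ ≤ ‖(glW τ (s + ε) - glW τ s) • e0‖ + ‖(glW τ (1 - (s + ε)) - glW τ (1 - s)) • e1‖ :=
        norm_add_le _ _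
    _ = |glW τ (s + ε) - glW τ s| * ‖e0‖ + |glW τ (1 - (s + ε)) - glW τ (1 - s)| * ‖e1‖ := by
        rw [norm_smul, norm_smul, Real.norm_eq_abs, Real.norm_eq_abs]
    _ ≤ ε / τ * (τ * C1) + ε / τ * (τ * C1) := by gcongr
    _ = 2 * C1 * ε := by field_simp; ring

theorem gl_J_lip {lam : ℝ} {F : H → EReal} (hp : ProperFn F) {τ : ℝ} (hτ : 0 < τ)
    (hκ : 0 < 1 + lam * τ) {J : H → H} (hJ : ∀ x, τ⁻¹ • (x - J x) ∈ subdiff lam F (J x))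
    (x y : H) : ‖J x - J y‖ ≤ (1 + lam * τ)⁻¹ * ‖x - y‖ := by
  have h := gl_resolvent_lip hp hτ (hJ x) (hJ y)
  rw [smul_inv_smul₀ hτ.ne', smul_inv_smul₀ hτ.ne', add_sub_cancel, add_sub_cancel] at h
  rw [inv_mul_eq_div, le_div_iff₀ hκ, mul_comm]
  exact h

theorem gl_J_fix_lip {lam : ℝ} {F : H → EReal} (hp : ProperFn F) {τ : ℝ} (hτ : 0 < τ)
    (hκ : 0 < 1 + lam * τ) {J : H → H} (hJ : ∀ x, τ⁻¹ • (x - J x) ∈ subdiff lam F (J x))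
    (x : H) {a p : H} (ha : p ∈ subdiff lam F a) :
    ‖J x - a‖ ≤ (1 + lam * τ)⁻¹ * ‖x - (a + τ • p)‖ := by
  have h := gl_resolvent_lip hp hτ (hJ x) ha
  rw [smul_inv_smul₀ hτ.ne', add_sub_cancel] at h
  rw [inv_mul_eq_div, le_div_iff₀ hκ, mul_comm]
  exact h

theorem gl_ext_cont {γ : ℝ → H} (hγ : ContinuousOn γ (Icc 0 1)) : Continuous (glExt γ) := by
  unfold glExt
  apply hγ.comp_continuous (by fun_prop)
  intro x
  exact ⟨le_max_left _ _, max_le zero_le_one (min_le_right _ _)⟩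

theorem gl_ext_eq (γ : ℝ → H) {t : ℝ} (ht : t ∈ Icc (0 : ℝ) 1) : glExt γ t = γ t := by
  unfold glExt; rw [min_eq_left ht.2, max_eq_right ht.1]

set_option maxHeartbeats 1000000 in
theorem gl_curve_estimate {lam : ℝ} {F : H → EReal} (hp : ProperFn F) {σ τ K C1 : ℝ}
    (hσ : 0 < σ) (hστ : τ = σ ^ 2) (hτ4 : τ < 1 / 4) (hκ : 1 / 2 ≤ 1 + lam * τ)
    (hK : K = (1 + lam * τ)⁻¹) (hC1 : 0 ≤ C1)
    {J : H → H} (hJ : ∀ x, τ⁻¹ • (x - J x) ∈ subdiff lam F (J x))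
    {γ g : ℝ → H} (hγc : ContinuousOn γ (Icc 0 1)) (hg : IntegrableOn g (Icc 0 1))
    (hγ : ∀ t ∈ Icc (0 : ℝ) 1, γ t = γ 0 + ∫ s in (0 : ℝ)..t, g s)
    (hA : ∫⁻ t in Ioc (0 : ℝ) 1, ‖g t‖ₑ ^ 2 ≠ ⊤)
    {a0 a1 p0 p1 : H} (hp0 : p0 ∈ subdiff lam F a0) (hp1 : p1 ∈ subdiff lam F a1)
    (he0 : ‖a0 + τ • p0 - γ 0‖ ≤ τ * C1) (he1 : ‖a1 + τ • p1 - γ 1‖ ≤ τ * C1)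
    (N : ℝ → ℝ≥0∞) (hN : ∀ t ∈ Ioc (0 : ℝ) 1,
      ENNReal.ofReal (‖γ t - J (γ t)‖ / τ) ≤ ENNReal.ofReal K * N t + ENNReal.ofReal τ) :
    ∃ u : ℝ → H, Continuous u ∧ u 0 = a0 ∧ u 1 = a1 ∧
      (∀ t ∈ Icc (0 : ℝ) 1, ‖u t - J (γ t)‖ ≤ 4 * (τ * C1)) ∧
      actionFn lam F 0 1 u ≤ ENNReal.ofReal ((1 + σ) * K ^ 2) *
          ((∫⁻ t in Ioc (0 : ℝ) 1, ‖g t‖ₑ ^ 2) + ∫⁻ t in Ioc (0 : ℝ) 1, N t ^ 2)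
        + ENNReal.ofReal ((2 + 264 * C1 ^ 2) * (σ ^ 2 + σ)) := by
  have hτ : 0 < τ := by rw [hστ]; positivity
  have hκ0 : 0 < 1 + lam * τ := by linarith
  have hK0 : 0 < K := by rw [hK]; positivity
  have hK2 : K ≤ 2 := by
    rw [hK]
    calc (1 + lam * τ)⁻¹ ≤ (1 / 2 : ℝ)⁻¹ := inv_anti₀ (by norm_num) hκ
      _ = 2 := by norm_num
  have hJl : ∀ x y, ‖J x - J y‖ ≤ K * ‖x - y‖ := by
    intro x y; rw [hK]; exact gl_J_lip hp hτ hκ0 hJ x y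
  have hJc : Continuous J := by
    have : LipschitzWith K.toNNReal J := LipschitzWith.of_dist_le_mul fun x y => by
      rw [dist_eq_norm, dist_eq_norm, Real.coe_toNNReal _ hK0.le]; exact hJl x y
    exact this.continuous
  have hfix : ∀ a p, p ∈ subdiff lam F a → J (a + τ • p) = a := by
    intro a p hap
    have := gl_J_fix_lip hp hτ hκ0 hJ (a + τ • p) hap
    rw [sub_self, norm_zero, mul_zero] at this
    exact sub_eq_zero.1 (norm_le_zero_iff.1 this)
  set e0 := a0 + τ • p0 - γ 0 with hee0
  set e1 := a1 + τ • p1 - γ 1 with hee1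
  set η : ℝ → H := fun t => glExt γ t + glC τ e0 e1 t with hη
  have hηc : Continuous η := (gl_ext_cont hγc).add (gl_C_cont τ e0 e1)
  set u : ℝ → H := fun t => J (η t) with hu
  have huc : Continuous u := hJc.comp hηc
  have W0 : glW τ 0 = 1 := by unfold glW; simp
  have W1 : glW τ 1 = 0 := gl_W_zero hτ (by linarith)
  have h0m : (0 : ℝ) ∈ Icc (0 : ℝ) 1 := by simp
  have h1m : (1 : ℝ) ∈ Icc (0 : ℝ) 1 := by simp
  have hu0 : u 0 = a0 := by
    rw [← hfix a0 p0 hp0]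
    simp only [hu, hη]
    congr 1
    rw [gl_ext_eq γ h0m]
    unfold glC
    rw [sub_zero, W0, W1, hee0]; simp
  have hu1 : u 1 = a1 := by
    rw [← hfix a1 p1 hp1]
    simp only [hu, hη]
    congr 1
    rw [gl_ext_eq γ h1m]
    unfold glC
    rw [sub_self, W0, W1, hee1]; simp
  set A := ∫⁻ t in Ioc (0 : ℝ) 1, ‖g t‖ₑ ^ 2 with hAdef
  have hEm := gl_E_meas τ
  have hEv : ∀ k : ℝ≥0∞, ∫⁻ t in Ioc (0 : ℝ) 1, (glE τ).indicator (fun _ => k) t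
      ≤ k * ENNReal.ofReal (3 * τ) := by
    intro k
    refine (setLIntegral_le_lintegral _ _).trans ?_
    rw [lintegral_indicator hEm, setLIntegral_const]
    gcongr
    exact gl_E_vol hτ
  have hnE : ∀ s ∈ Ioc (0 : ℝ) 1, s ∉ glE τ → τ ≤ s ∧ s ≤ 1 - 2 * τ := by
    intro s hs hsE
    simp only [glE, mem_union, mem_Icc, not_or, not_and, not_le] at hsE
    refine ⟨(hsE.1 hs.1.le).le, ?_⟩
    by_contra hcon
    push Not at hcon
    exact absurd (hsE.2 hcon.le) (not_lt.2 hs.2)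
  -- velocity
  set M : ℝ := K ^ 2 * (1 + σ) * A.toReal + K ^ 2 * (1 + σ⁻¹) * (12 * C1 ^ 2 * τ) with hM
  have hM0 : 0 ≤ M := by positivity
  have hvel : ∀ ε, 0 < ε → ε ≤ τ →
      ∫⁻ s in Ioc (0 : ℝ) 1, ‖u (s + ε) - u s‖ₑ ^ 2 ≤ ENNReal.ofReal (ε ^ 2 * M) := by
    intro ε hε hετ
    have hpt : ∀ s ∈ Ioc (0 : ℝ) 1, ‖u (s + ε) - u s‖ₑ ^ 2 ≤
        ENNReal.ofReal (K ^ 2 * (1 + σ)) * ‖glExt γ (s + ε) - glExt γ s‖ₑ ^ 2 +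
        (glE τ).indicator (fun _ => ENNReal.ofReal (K ^ 2 * (1 + σ⁻¹) * (2 * C1 * ε) ^ 2)) s := by
      intro s hs
      have h1 : ‖u (s + ε) - u s‖ₑ ≤ ENNReal.ofReal K * (‖glExt γ (s + ε) - glExt γ s‖ₑ +
          ‖glC τ e0 e1 (s + ε) - glC τ e0 e1 s‖ₑ) := by
        rw [← ofReal_norm, ← ofReal_norm, ← ofReal_norm,
          ← ENNReal.ofReal_add (norm_nonneg _) (norm_nonneg _), ← ENNReal.ofReal_mul hK0.le]
        apply ENNReal.ofReal_le_ofReal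
        refine (hJl _ _).trans ?_
        gcongr
        have : η (s + ε) - η s = (glExt γ (s + ε) - glExt γ s) +
          (glC τ e0 e1 (s + ε) - glC τ e0 e1 s) := by simp only [hη]; abel
        rw [this]; exact norm_add_le _ _
      have h2 : ‖glC τ e0 e1 (s + ε) - glC τ e0 e1 s‖ₑ ^ 2 ≤
          (glE τ).indicator (fun _ => ENNReal.ofReal ((2 * C1 * ε) ^ 2)) s := by
        by_cases hsE : s ∈ glE τ
        · rw [indicator_of_mem hsE, ← gl_enorm_sq]
          apply ENNReal.ofReal_le_ofReal
          have := gl_C_lip hτ he0 he1 s ε hε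
          gcongr
        · obtain ⟨b1, b2⟩ := hnE s hs hsE
          have z1 := gl_C_zero hτ e0 e1 b1 b2 hε.le hετ
          have z2 := gl_C_zero hτ e0 e1 b1 b2 le_rfl hτ.le
          rw [add_zero] at z2
          rw [z1, z2]; simp
      calc ‖u (s + ε) - u s‖ₑ ^ 2 ≤ (ENNReal.ofReal K * (‖glExt γ (s + ε) - glExt γ s‖ₑ +
          ‖glC τ e0 e1 (s + ε) - glC τ e0 e1 s‖ₑ)) ^ 2 := by gcongr
        _ ≤ ENNReal.ofReal K ^ 2 * (ENNReal.ofReal (1 + σ) * ‖glExt γ (s + ε) - glExt γ s‖ₑ ^ 2 +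
            ENNReal.ofReal (1 + σ⁻¹) *
              (glE τ).indicator (fun _ => ENNReal.ofReal ((2 * C1 * ε) ^ 2)) s) := by
            rw [mul_pow]
            gcongr
            refine (gl_sq_add _ _ hσ).trans ?_
            gcongr
        _ = _ := by
            rw [mul_add, ← mul_assoc, ← mul_assoc, ← ENNReal.ofReal_pow hK0.le,
              ← ENNReal.ofReal_mul (by positivity), ← ENNReal.ofReal_mul (by positivity)]
            congr 1
            by_cases hsE : s ∈ glE τ
            · rw [indicator_of_mem hsE, indicator_of_mem hsE, ← ENNReal.ofReal_mul (by positivity)]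
            · rw [indicator_of_notMem hsE, indicator_of_notMem hsE, mul_zero]
    calc ∫⁻ s in Ioc (0 : ℝ) 1, ‖u (s + ε) - u s‖ₑ ^ 2
        ≤ ∫⁻ s in Ioc (0 : ℝ) 1,
          (ENNReal.ofReal (K ^ 2 * (1 + σ)) * ‖glExt γ (s + ε) - glExt γ s‖ₑ ^ 2 +
          (glE τ).indicator (fun _ => ENNReal.ofReal (K ^ 2 * (1 + σ⁻¹) * (2 * C1 * ε) ^ 2)) s) :=
          setLIntegral_mono' measurableSet_Ioc hpt
      _ = ENNReal.ofReal (K ^ 2 * (1 + σ)) *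
            (∫⁻ s in Ioc (0 : ℝ) 1, ‖glExt γ (s + ε) - glExt γ s‖ₑ ^ 2) +
          ∫⁻ s in Ioc (0 : ℝ) 1, (glE τ).indicator
            (fun _ => ENNReal.ofReal (K ^ 2 * (1 + σ⁻¹) * (2 * C1 * ε) ^ 2)) s := by
          rw [lintegral_add_right _ (measurable_const.indicator hEm),
            lintegral_const_mul' _ _ ENNReal.ofReal_ne_top]
      _ ≤ ENNReal.ofReal (K ^ 2 * (1 + σ)) * (ENNReal.ofReal (ε ^ 2) * A) +
          ENNReal.ofReal (K ^ 2 * (1 + σ⁻¹) * (2 * C1 * ε) ^ 2) * ENNReal.ofReal (3 * τ) := by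
          gcongr
          · exact gl_diffquot_of_ac γ g hg hγ hε
          · exact hEv _
      _ = ENNReal.ofReal (ε ^ 2 * M) := by
          rw [← ENNReal.ofReal_toReal hA, ← ENNReal.ofReal_mul (by positivity),
            ← ENNReal.ofReal_mul (by positivity), ← ENNReal.ofReal_mul (by positivity),
            ← ENNReal.ofReal_add (by positivity) (by positivity)]
          congr 1
          rw [hM]; ring
  obtain ⟨gu, hgu1, hgu2, hgu3⟩ := gl_ac_of_diffquot u huc M τ hM0 hτ hvel
  refine ⟨u, huc, hu0, hu1, ?_, ?_⟩
  · intro t ht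
    have h1 := hJl (η t) (γ t)
    have h2 : η t - γ t = glC τ e0 e1 t := by simp only [hη]; rw [gl_ext_eq γ ht]; abel
    rw [h2] at h1
    have h3 := gl_C_bd hτ he0 he1 ht
    calc ‖u t - J (γ t)‖ ≤ K * ‖glC τ e0 e1 t‖ := h1
      _ ≤ 2 * (2 * (τ * C1)) := by gcongr
      _ = _ := by ring
  rw [gl_action_eq lam F u gu hgu1 hgu2]
  have hgm : AEMeasurable (fun t => ‖gu t‖ₑ ^ 2) (volume.restrict (Ioc (0 : ℝ) 1)) :=
    (hgu1.mono_set Ioc_subset_Icc_self).aestronglyMeasurable.enorm.pow_const 2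
  rw [lintegral_add_left' hgm]
  set b : ℝ → ℝ≥0∞ := fun t => ENNReal.ofReal (2 * τ ^ 2) +
    (glE τ).indicator (fun _ => ENNReal.ofReal (72 * C1 ^ 2)) t with hb
  have hbm : Measurable b := by
    rw [hb]
    exact Measurable.add (measurable_const (a := ENNReal.ofReal (2 * τ ^ 2)))
      ((measurable_const (a := ENNReal.ofReal (72 * C1 ^ 2))).indicator hEm)
  have hgr : ∀ t ∈ Ioc (0 : ℝ) 1, gradNorm lam F (u t) ^ 2 ≤
      ENNReal.ofReal ((1 + σ) * K ^ 2) * N t ^ 2 + ENNReal.ofReal (1 + σ⁻¹) * b t := by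
    intro t ht
    have htI : t ∈ Icc (0 : ℝ) 1 := Ioc_subset_Icc_self ht
    have h1 : gradNorm lam F (u t) ≤ ENNReal.ofReal (‖η t - J (η t)‖ / τ) := by
      refine (gl_gradNorm_le (hJ (η t))).trans (le_of_eq ?_)
      rw [norm_smul, norm_inv, Real.norm_eq_abs, abs_of_pos hτ, inv_mul_eq_div]
    have h2 : η t = γ t + glC τ e0 e1 t := by simp only [hη]; rw [gl_ext_eq γ htI]
    have h3 : ‖η t - J (η t)‖ ≤ ‖γ t - J (γ t)‖ + 3 * ‖glC τ e0 e1 t‖ := by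
      have e : η t - J (η t) = (γ t - J (γ t)) + glC τ e0 e1 t + (J (γ t) - J (η t)) := by
        rw [h2]; abel
      have l := hJl (γ t) (η t)
      have e2 : ‖γ t - η t‖ = ‖glC τ e0 e1 t‖ := by
        rw [h2, norm_sub_rev, add_sub_cancel_left]
      rw [e2] at l
      have l2 : K * ‖glC τ e0 e1 t‖ ≤ 2 * ‖glC τ e0 e1 t‖ := by gcongr
      have l3 := norm_add₃_le (a := γ t - J (γ t)) (b := glC τ e0 e1 t) (c := J (γ t) - J (η t))
      rw [e]; linarith
    have h4 : ENNReal.ofReal (3 * ‖glC τ e0 e1 t‖ / τ) ≤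
        (glE τ).indicator (fun _ => ENNReal.ofReal (6 * C1)) t := by
      by_cases htE : t ∈ glE τ
      · rw [indicator_of_mem htE]
        apply ENNReal.ofReal_le_ofReal
        rw [div_le_iff₀ hτ]
        have := gl_C_bd hτ he0 he1 htI
        linarith
      · obtain ⟨b1, b2⟩ := hnE t ht htE
        have z2 := gl_C_zero hτ e0 e1 b1 b2 le_rfl hτ.le
        rw [add_zero] at z2
        rw [z2]; simp
    set i6 := (glE τ).indicator (fun _ => ENNReal.ofReal (6 * C1)) t with hi6
    have h5 : gradNorm lam F (u t) ≤ ENNReal.ofReal K * N t + (ENNReal.ofReal τ + i6) := by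
      refine h1.trans ?_
      calc ENNReal.ofReal (‖η t - J (η t)‖ / τ)
          ≤ ENNReal.ofReal (‖γ t - J (γ t)‖ / τ + 3 * ‖glC τ e0 e1 t‖ / τ) := by
            apply ENNReal.ofReal_le_ofReal
            rw [← add_div]; gcongr
        _ = ENNReal.ofReal (‖γ t - J (γ t)‖ / τ) + ENNReal.ofReal (3 * ‖glC τ e0 e1 t‖ / τ) :=
            ENNReal.ofReal_add (by positivity) (by positivity)
        _ ≤ (ENNReal.ofReal K * N t + ENNReal.ofReal τ) + i6 := add_le_add (hN t ht) h4
        _ = _ := add_assoc _ _ _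
    have h6 : (ENNReal.ofReal τ + i6) ^ 2 ≤ b t := by
      refine (gl_sq_add _ _ one_pos).trans (le_of_eq ?_)
      simp only [hb]
      rw [← ENNReal.ofReal_pow hτ.le, ← ENNReal.ofReal_mul (by norm_num)]
      congr 1
      · norm_num
      · by_cases htE : t ∈ glE τ
        · rw [hi6, indicator_of_mem htE, indicator_of_mem htE, ← ENNReal.ofReal_pow (by positivity),
            ← ENNReal.ofReal_mul (by norm_num)]
          congr 1; ring
        · rw [hi6, indicator_of_notMem htE, indicator_of_notMem htE]; simp
    calc gradNorm lam F (u t) ^ 2 ≤ (ENNReal.ofReal K * N t + (ENNReal.ofReal τ + i6)) ^ 2 := by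
          gcongr
      _ ≤ ENNReal.ofReal (1 + σ) * (ENNReal.ofReal K * N t) ^ 2 +
          ENNReal.ofReal (1 + σ⁻¹) * (ENNReal.ofReal τ + i6) ^ 2 := gl_sq_add _ _ hσ
      _ ≤ ENNReal.ofReal (1 + σ) * (ENNReal.ofReal K * N t) ^ 2 +
          ENNReal.ofReal (1 + σ⁻¹) * b t := by gcongr
      _ = _ := by
          rw [mul_pow, ← mul_assoc, ← ENNReal.ofReal_pow hK0.le,
            ← ENNReal.ofReal_mul (by positivity)]
  have hgrad : ∫⁻ t in Ioc (0 : ℝ) 1, gradNorm lam F (u t) ^ 2 ≤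
      ENNReal.ofReal ((1 + σ) * K ^ 2) * (∫⁻ t in Ioc (0 : ℝ) 1, N t ^ 2) +
      ENNReal.ofReal ((1 + σ⁻¹) * (2 * τ ^ 2 + 72 * C1 ^ 2 * (3 * τ))) := by
    calc _ ≤ ∫⁻ t in Ioc (0 : ℝ) 1, (ENNReal.ofReal ((1 + σ) * K ^ 2) * N t ^ 2 +
          ENNReal.ofReal (1 + σ⁻¹) * b t) := setLIntegral_mono' measurableSet_Ioc hgr
      _ = ENNReal.ofReal ((1 + σ) * K ^ 2) * (∫⁻ t in Ioc (0 : ℝ) 1, N t ^ 2) +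
          ENNReal.ofReal (1 + σ⁻¹) * ∫⁻ t in Ioc (0 : ℝ) 1, b t := by
          rw [lintegral_add_right _ (hbm.const_mul _),
            lintegral_const_mul' _ _ ENNReal.ofReal_ne_top,
            lintegral_const_mul' _ _ ENNReal.ofReal_ne_top]
      _ ≤ _ := by
          gcongr
          rw [ENNReal.ofReal_mul (by positivity)]
          gcongr
          simp only [hb]
          rw [lintegral_add_left measurable_const, setLIntegral_const, Real.volume_Ioc,
            ENNReal.ofReal_add (by positivity) (by positivity), sub_zero, ENNReal.ofReal_one,
            mul_one]
          gcongr
          refine (hEv _).trans (le_of_eq ?_)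
          rw [← ENNReal.ofReal_mul (by positivity)]
  calc _ ≤ ENNReal.ofReal M + (ENNReal.ofReal ((1 + σ) * K ^ 2) * (∫⁻ t in Ioc (0 : ℝ) 1, N t ^ 2) +
      ENNReal.ofReal ((1 + σ⁻¹) * (2 * τ ^ 2 + 72 * C1 ^ 2 * (3 * τ)))) := add_le_add hgu3 hgrad
    _ = ENNReal.ofReal ((1 + σ) * K ^ 2) * (A + ∫⁻ t in Ioc (0 : ℝ) 1, N t ^ 2) +
        ENNReal.ofReal (K ^ 2 * (1 + σ⁻¹) * (12 * C1 ^ 2 * τ) +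
          (1 + σ⁻¹) * (2 * τ ^ 2 + 72 * C1 ^ 2 * (3 * τ))) := by
        rw [hM, ENNReal.ofReal_add (p := K ^ 2 * (1 + σ) * A.toReal) (by positivity) (by positivity),
          ENNReal.ofReal_mul (p := K ^ 2 * (1 + σ)) (by positivity), ENNReal.ofReal_toReal hA,
          ENNReal.ofReal_add (p := K ^ 2 * (1 + σ⁻¹) * (12 * C1 ^ 2 * τ)) (by positivity)
            (by positivity), mul_comm (K ^ 2) (1 + σ)]
        ring
    _ ≤ _ := by
        gcongr ?_ + ?_
        · exact le_rfl
        apply ENNReal.ofReal_le_ofReal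
        have hK4 : K ^ 2 ≤ 4 := by nlinarith
        have hs1 : (1 + σ⁻¹) * τ = σ ^ 2 + σ := by rw [hστ]; field_simp
        have hpos : 0 ≤ σ ^ 2 + σ := by positivity
        calc K ^ 2 * (1 + σ⁻¹) * (12 * C1 ^ 2 * τ) +
              (1 + σ⁻¹) * (2 * τ ^ 2 + 72 * C1 ^ 2 * (3 * τ))
            = ((1 + σ⁻¹) * τ) * (K ^ 2 * (12 * C1 ^ 2) + 2 * τ + 216 * C1 ^ 2) := by ring
          _ = (σ ^ 2 + σ) * (K ^ 2 * (12 * C1 ^ 2) + 2 * τ + 216 * C1 ^ 2) := by rw [hs1]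
          _ ≤ (σ ^ 2 + σ) * (4 * (12 * C1 ^ 2) + 2 * 1 + 216 * C1 ^ 2) := by
              gcongr; linarith
          _ = _ := by ring


theorem gl_unif {Jh : ℕ → H → H} {J : H → H} (hJh : ∀ h x y, ‖Jh h x - Jh h y‖ ≤ 2 * ‖x - y‖)
    (hJ : ∀ x y, ‖J x - J y‖ ≤ 2 * ‖x - y‖) (hc : ∀ x, Tendsto (fun h => Jh h x) atTop (𝓝 (J x)))
    {S : Set H} (hS : IsCompact S) {ε : ℝ} (hε : 0 < ε) :
    ∀ᶠ h in atTop, ∀ x ∈ S, ‖Jh h x - J x‖ ≤ ε := by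
  obtain ⟨T, -, hTf, hT⟩ := hS.finite_cover_balls (e := ε / 8) (by positivity)
  have h1 : ∀ᶠ h in atTop, ∀ x ∈ T, ‖Jh h x - J x‖ < ε / 2 := by
    rw [eventually_all_finite hTf]
    intro x _
    have := Metric.tendsto_nhds.1 (hc x) (ε / 2) (by positivity)
    simpa only [dist_eq_norm] using this
  filter_upwards [h1] with h hh x hx
  obtain ⟨z, hz, hxz⟩ := mem_iUnion₂.1 (hT hx)
  rw [Metric.mem_ball, dist_eq_norm] at hxz
  have a1 := hJh h x z
  have a2 := hJ z x
  rw [norm_sub_rev z x] at a2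
  have a3 := hh z hz
  have : Jh h x - J x = (Jh h x - Jh h z) + (Jh h z - J z) + (J z - J x) := by abel
  rw [this]
  have := norm_add₃_le (a := Jh h x - Jh h z) (b := Jh h z - J z) (c := J z - J x)
  linarith

theorem gl_mean {G : ℝ → ℝ≥0∞} (hG : ∫⁻ t in Ioc (0 : ℝ) 1, G t ^ 2 ≠ ⊤) {r : ℝ} (hr : 0 < r) :
    ∃ M : ℝ, 0 ≤ M ∧ ∀ t ∈ Icc (0 : ℝ) 1, ∃ s ∈ Ioc (0 : ℝ) 1, |s - t| < r ∧
      G s ≤ ENNReal.ofReal M := by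
  set B := ∫⁻ t in Ioc (0 : ℝ) 1, G t ^ 2 with hB
  set ρ := min (r / 2) (1 / 2) with hρ
  have hρ0 : 0 < ρ := lt_min (by positivity) (by norm_num)
  have hρr : ρ < r := lt_of_le_of_lt (min_le_left _ _) (by linarith)
  have hρ1 : ρ ≤ 1 / 2 := min_le_right _ _
  set M := B.toReal / ρ + 1 with hMd
  have hB0 : 0 ≤ B.toReal / ρ := by positivity
  have hM1 : 1 ≤ M := by linarith
  refine ⟨M, by linarith, fun t ht => ?_⟩
  have key : ∀ a : ℝ, Ioc a (a + ρ) ⊆ Ioc 0 1 →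
      ∃ s ∈ Ioc a (a + ρ), G s ≤ ENNReal.ofReal M := by
    intro a ha
    by_contra! hcon
    have h1 : ENNReal.ofReal (M ^ 2 * ρ) ≤ B := by
      calc ENNReal.ofReal (M ^ 2 * ρ) = ENNReal.ofReal M ^ 2 * volume (Ioc a (a + ρ)) := by
            rw [Real.volume_Ioc, ENNReal.ofReal_mul (by positivity),
              ENNReal.ofReal_pow (by linarith)]
            congr 2; ring
        _ = ∫⁻ _ in Ioc a (a + ρ), ENNReal.ofReal M ^ 2 := (setLIntegral_const _ _).symm
        _ ≤ ∫⁻ s in Ioc a (a + ρ), G s ^ 2 := by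
            apply setLIntegral_mono' measurableSet_Ioc
            intro s hs
            gcongr
            exact (hcon s hs).le
        _ ≤ B := lintegral_mono_set ha
    have h2 : M ^ 2 * ρ ≤ B.toReal := by
      rwa [ENNReal.ofReal_le_iff_le_toReal hG] at h1
    have h3 : M * ρ = B.toReal + ρ := by rw [hMd]; field_simp
    nlinarith [mul_le_mul_of_nonneg_right hM1 (by nlinarith : 0 ≤ M * ρ)]
  rcases le_total t (1 / 2) with h | h
  · obtain ⟨s, hs, hG⟩ := key t (fun s hs => ⟨lt_of_le_of_lt ht.1 hs.1, by linarith [hs.2]⟩)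
    refine ⟨s, ⟨lt_of_le_of_lt ht.1 hs.1, by linarith [hs.2]⟩, ?_, hG⟩
    rw [abs_lt]; constructor <;> linarith [hs.1, hs.2]
  · obtain ⟨s, hs, hG⟩ := key (t - ρ)
      (fun s hs => ⟨by linarith [hs.1], by linarith [hs.2, ht.2]⟩)
    refine ⟨s, ⟨by linarith [hs.1], by linarith [hs.2, ht.2]⟩, ?_, hG⟩
    rw [abs_lt]; constructor <;> linarith [hs.1, hs.2]

theorem gl_slope {lam : ℝ} {F : H → EReal} (hp : ProperFn F) {τ : ℝ} (hτ : 0 < τ)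
    (hκ : 0 < 1 + lam * τ) {J : H → H} (hJ : ∀ x, τ⁻¹ • (x - J x) ∈ subdiff lam F (J x)) (x : H) :
    ENNReal.ofReal (‖x - J x‖ / τ) ≤ ENNReal.ofReal ((1 + lam * τ)⁻¹) * gradNorm lam F x := by
  by_cases h : gradNorm lam F x = ⊤
  · rw [h, ENNReal.mul_top]
    · exact le_top
    · rw [Ne, ENNReal.ofReal_eq_zero, not_le]; positivity
  · obtain ⟨p, hps, hpn⟩ := gl_exists_grad hp h
    have := gl_J_fix_lip hp hτ hκ hJ x hps
    rw [← hpn, ← ENNReal.ofReal_mul (by positivity)]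
    apply ENNReal.ofReal_le_ofReal
    rw [sub_add_cancel_left, norm_neg, norm_smul, Real.norm_of_nonneg hτ.le, norm_sub_rev] at this
    rw [div_le_iff₀ hτ]
    linarith

theorem gl_near {lam : ℝ} {F : H → EReal} (hp : ProperFn F) {τ : ℝ} (hτ : 0 < τ)
    (hκ : 1 / 2 ≤ 1 + lam * τ) {J : H → H} (hJ : ∀ x, τ⁻¹ • (x - J x) ∈ subdiff lam F (J x))
    (x y : H) {M : ℝ} (hM : 0 ≤ M) (hy : gradNorm lam F y ≤ ENNReal.ofReal M) :
    ‖J x - x‖ ≤ 3 * ‖x - y‖ + 2 * τ * M := by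
  have hκ0 : 0 < 1 + lam * τ := by linarith
  have hK2 : (1 + lam * τ)⁻¹ ≤ 2 := by
    calc (1 + lam * τ)⁻¹ ≤ (1 / 2 : ℝ)⁻¹ := inv_anti₀ (by norm_num) hκ
      _ = 2 := by norm_num
  obtain ⟨p, hps, hpn⟩ := gl_exists_grad hp (ne_top_of_le_ne_top ENNReal.ofReal_ne_top hy)
  rw [← hpn, ENNReal.ofReal_le_ofReal_iff hM] at hy
  have h1 := gl_J_fix_lip hp hτ hκ0 hJ x hps
  have h2 : ‖x - (y + τ • p)‖ ≤ ‖x - y‖ + τ * M := by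
    rw [← sub_sub]
    refine (norm_sub_le _ _).trans ?_
    rw [norm_smul, Real.norm_of_nonneg hτ.le]
    gcongr
  have h3 : (1 + lam * τ)⁻¹ * ‖x - (y + τ • p)‖ ≤ 2 * (‖x - y‖ + τ * M) := by gcongr
  have h4 : J x - x = (J x - y) - (x - y) := by abel
  rw [h4]
  have := norm_sub_le (J x - y) (x - y)
  linarith

theorem gl_diag {X : Type*} (P : ℕ → ℝ → X → Prop) (x0 : X)
    (hmono : ∀ h ε ε' x, ε ≤ ε' → P h ε x → P h ε' x)
    (hP : ∀ ε > 0, ∀ᶠ h in atTop, ∃ x, P h ε x) :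
    ∃ u : ℕ → X, ∀ ε > 0, ∀ᶠ h in atTop, P h ε (u h) := by
  set Q : ℕ → ℕ → Prop := fun h n => ∃ x, P h (1 / ((n : ℝ) + 1)) x with hQ
  set n : ℕ → ℕ := fun h => Nat.findGreatest (Q h) h with hn
  refine ⟨fun h => if hh : Q h (n h) then hh.choose else x0, fun ε hε => ?_⟩
  obtain ⟨m, hm⟩ := exists_nat_one_div_lt hε
  filter_upwards [hP (1 / ((m : ℝ) + 1)) (by positivity), eventually_ge_atTop m] with h h1 h2
  have h3 : Q h (n h) := Nat.findGreatest_spec (P := Q h) h2 h1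
  have h4 : m ≤ n h := Nat.le_findGreatest h2 h1
  rw [dif_pos h3]
  refine hmono h _ ε _ ?_ h3.choose_spec
  refine le_trans ?_ hm.le
  apply one_div_le_one_div_of_le (by positivity)
  have : (m : ℝ) ≤ (n h : ℝ) := by exact_mod_cast h4
  linarith

theorem gl_choose_sigma (lam C1 M I ε : ℝ) (hε : 0 < ε) :
    ∃ σ : ℝ, 0 < σ ∧ σ ^ 2 < 1 / 4 ∧ 1 / 2 ≤ 1 + lam * σ ^ 2 ∧
      4 * (σ ^ 2 * C1) + (σ ^ 2) ^ 2 + 2 * σ ^ 2 * M ≤ ε / 2 ∧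
      (1 + σ) * ((1 + lam * σ ^ 2)⁻¹) ^ 2 * I + (2 + 264 * C1 ^ 2) * (σ ^ 2 + σ) ≤ I + ε := by
  have c1 : ∀ᶠ σ : ℝ in 𝓝[>] 0, σ ^ 2 < 1 / 4 := by
    apply eventually_nhdsWithin_of_eventually_nhds
    have : ContinuousAt (fun σ : ℝ => σ ^ 2) 0 := by fun_prop
    exact this.eventually_lt_const (by norm_num)
  have c2 : ∀ᶠ σ : ℝ in 𝓝[>] 0, 1 / 2 < 1 + lam * σ ^ 2 := by
    apply eventually_nhdsWithin_of_eventually_nhds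
    have : ContinuousAt (fun σ : ℝ => 1 + lam * σ ^ 2) 0 := by fun_prop
    exact this.eventually_const_lt (by norm_num)
  have c3 : ∀ᶠ σ : ℝ in 𝓝[>] 0, 4 * (σ ^ 2 * C1) + (σ ^ 2) ^ 2 + 2 * σ ^ 2 * M < ε / 2 := by
    apply eventually_nhdsWithin_of_eventually_nhds
    have : ContinuousAt (fun σ : ℝ => 4 * (σ ^ 2 * C1) + (σ ^ 2) ^ 2 + 2 * σ ^ 2 * M) 0 := by
      fun_prop
    exact this.eventually_lt_const (by simpa using hε)
  have c4 : ∀ᶠ σ : ℝ in 𝓝[>] 0,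
      (1 + σ) * ((1 + lam * σ ^ 2)⁻¹) ^ 2 * I + (2 + 264 * C1 ^ 2) * (σ ^ 2 + σ) < I + ε := by
    apply eventually_nhdsWithin_of_eventually_nhds
    have h0 : ContinuousAt (fun σ : ℝ => (1 + lam * σ ^ 2)⁻¹) 0 := by
      apply ContinuousAt.inv₀ (by fun_prop)
      norm_num
    have : ContinuousAt (fun σ : ℝ =>
      (1 + σ) * ((1 + lam * σ ^ 2)⁻¹) ^ 2 * I + (2 + 264 * C1 ^ 2) * (σ ^ 2 + σ)) 0 := by
      fun_prop
    exact this.eventually_lt_const (by simpa using hε)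
  obtain ⟨σ, h0, h1, h2, h3, h4⟩ :=
    (eventually_mem_nhdsWithin.and (c1.and (c2.and (c3.and c4)))).exists
  exact ⟨σ, h0, h1, h2.le, h3.le, h4.le⟩

theorem gl_key {lam : ℝ} {fh : ℕ → H → EReal} {f : H → EReal}
    (hfh_proper : ∀ h, ProperFn (fh h)) (hfh_conv : ∀ h, LambdaConvex lam (fh h))
    (hfh_lsc : ∀ h, LowerSemicontinuous (fh h))
    (hf_proper : ProperFn f) (hf_conv : LambdaConvex lam f) (hf_lsc : LowerSemicontinuous f)
    (hM : Mosco fh f) {xh0 xh1 p0 p1 : ℕ → H} {γ g : ℝ → H} {C : ℝ} (hC : 0 ≤ C)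
    (hx0 : Tendsto xh0 atTop (𝓝 (γ 0))) (hx1 : Tendsto xh1 atTop (𝓝 (γ 1)))
    (hp0 : ∀ h, p0 h ∈ subdiff lam (fh h) (xh0 h)) (hp0C : ∀ h, ‖p0 h‖ ≤ C)
    (hp1 : ∀ h, p1 h ∈ subdiff lam (fh h) (xh1 h)) (hp1C : ∀ h, ‖p1 h‖ ≤ C)
    (hγc : ContinuousOn γ (Icc 0 1)) (hg : IntegrableOn g (Icc 0 1))
    (hγ : ∀ t ∈ Icc (0 : ℝ) 1, γ t = γ 0 + ∫ s in (0 : ℝ)..t, g s)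
    (hfin : actionFn lam f 0 1 γ ≠ ⊤) {ε : ℝ} (hε : 0 < ε) :
    ∀ᶠ h in atTop, ∃ u : ℝ → H, ContinuousOn u (Icc 0 1) ∧
      (∀ t ∈ Icc (0 : ℝ) 1, ‖u t - γ t‖ ≤ ε) ∧
      Theta lam (fh h) (xh0 h) (xh1 h) u ≤ actionFn lam f 0 1 γ + ENNReal.ofReal ε := by
  have hgm : AEMeasurable (fun t => ‖g t‖ₑ ^ 2) (volume.restrict (Ioc (0 : ℝ) 1)) :=
    (hg.mono_set Ioc_subset_Icc_self).aestronglyMeasurable.enorm.pow_const 2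
  have hact := gl_action_eq lam f γ g hg hγ
  rw [lintegral_add_left' hgm] at hact
  set I := actionFn lam f 0 1 γ with hI
  have hA : ∫⁻ t in Ioc (0 : ℝ) 1, ‖g t‖ₑ ^ 2 ≠ ⊤ := by
    intro hh; rw [hh, top_add] at hact; exact hfin hact
  have hB : ∫⁻ t in Ioc (0 : ℝ) 1, gradNorm lam f (γ t) ^ 2 ≠ ⊤ := by
    intro hh; rw [hh, add_top] at hact; exact hfin hact
  -- modulus of continuity
  obtain ⟨r, hr, hrγ⟩ := Metric.uniformContinuousOn_iff.1
    (isCompact_Icc.uniformContinuousOn_of_continuous hγc) (ε / 6) (by positivity)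
  obtain ⟨M, hM0, hMs⟩ := gl_mean (G := fun t => gradNorm lam f (γ t)) hB hr
  obtain ⟨σ, hσ, hτ4, hκ, hclose, hval⟩ := gl_choose_sigma lam (C + 1) M I.toReal ε hε
  set τ := σ ^ 2 with hτd
  have hτ : 0 < τ := by positivity
  have hκ0 : 0 < 1 + lam * τ := by linarith
  have hK2 : (1 + lam * τ)⁻¹ ≤ 2 := by
    calc (1 + lam * τ)⁻¹ ≤ (1 / 2 : ℝ)⁻¹ := inv_anti₀ (by norm_num) hκ
      _ = 2 := by norm_num
  choose J hJ using gl_exists_resolvent hf_proper hf_conv hf_lsc hτ hκ0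
  have hex : ∀ h, ∃ Jh : H → H, ∀ x, τ⁻¹ • (x - Jh x) ∈ subdiff lam (fh h) (Jh x) := fun h => by
    choose Jh hJh using gl_exists_resolvent (hfh_proper h) (hfh_conv h) (hfh_lsc h) hτ hκ0
    exact ⟨Jh, hJh⟩
  choose Jh hJh using hex
  have hlip : ∀ h x y, ‖Jh h x - Jh h y‖ ≤ 2 * ‖x - y‖ := fun h x y =>
    (gl_J_lip (hfh_proper h) hτ hκ0 (hJh h) x y).trans (by gcongr)
  have hlip' : ∀ x y, ‖J x - J y‖ ≤ 2 * ‖x - y‖ := fun x y =>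
    (gl_J_lip hf_proper hτ hκ0 hJ x y).trans (by gcongr)
  obtain ⟨R0, hR0⟩ := (Metric.isBounded_range_of_tendsto xh0 hx0).exists_norm_le
  have hconv : ∀ x, Tendsto (fun h => Jh h x) atTop (𝓝 (J x)) := by
    intro x
    refine gl_resolvent_tendsto hfh_proper hf_proper hM hτ hκ0 x _ _ (fun h => hJh h x) (hJ x)
      (R0 + 2 * (‖x‖ + (R0 + τ * C))) (fun h => ?_)
    have h1 := gl_J_fix_lip (hfh_proper h) hτ hκ0 (hJh h) x (hp0 h)
    have h0 := hR0 (xh0 h) ⟨h, rfl⟩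
    have h2 : ‖x - (xh0 h + τ • p0 h)‖ ≤ ‖x‖ + (R0 + τ * C) := by
      refine (norm_sub_le _ _).trans ?_
      gcongr
      refine (norm_add_le _ _).trans ?_
      rw [norm_smul, Real.norm_of_nonneg hτ.le]
      have := hp0C h
      gcongr
    have h3 : (1 + lam * τ)⁻¹ * ‖x - (xh0 h + τ • p0 h)‖ ≤ 2 * (‖x‖ + (R0 + τ * C)) := by gcongr
    have h4 : Jh h x = xh0 h + (Jh h x - xh0 h) := by abel
    rw [h4]
    have := norm_add_le (xh0 h) (Jh h x - xh0 h)
    linarith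
  have hE := gl_unif hlip hlip' hconv (isCompact_Icc.image_of_continuousOn hγc)
    (ε := τ ^ 2) (by positivity)
  have hE0 := Metric.tendsto_nhds.1 hx0 τ hτ
  have hE1 := Metric.tendsto_nhds.1 hx1 τ hτ
  filter_upwards [hE, hE0, hE1] with h hu h0 h1
  have hend : ∀ x p y : H, dist x y < τ → ‖p‖ ≤ C → ‖x + τ • p - y‖ ≤ τ * (C + 1) := by
    intro x p y hxy hp
    have : x + τ • p - y = (x - y) + τ • p := by abel
    rw [this]
    refine (norm_add_le _ _).trans ?_
    rw [norm_smul, Real.norm_of_nonneg hτ.le, ← dist_eq_norm]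
    nlinarith [mul_le_mul_of_nonneg_left hp hτ.le]
  obtain ⟨u, huc, hu0, hu1, hud, hua⟩ := gl_curve_estimate (hfh_proper h) hσ hτd hτ4 hκ rfl
    (by linarith : 0 ≤ C + 1) (hJh h) hγc hg hγ hA (hp0 h) (hp1 h)
    (hend _ _ _ h0 (hp0C h)) (hend _ _ _ h1 (hp1C h)) (fun t => gradNorm lam f (γ t)) (by
      intro t ht
      have e1 := hu (γ t) ⟨t, Ioc_subset_Icc_self ht, rfl⟩
      refine le_trans ?_ (add_le_add_left (gl_slope hf_proper hτ hκ0 hJ (γ t)) _)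
      rw [← ENNReal.ofReal_add (by positivity) hτ.le]
      apply ENNReal.ofReal_le_ofReal
      rw [div_add' _ _ _ hτ.ne']
      gcongr
      have e2 : γ t - Jh h (γ t) = (γ t - J (γ t)) - (Jh h (γ t) - J (γ t)) := by abel
      rw [e2]
      have := norm_sub_le (γ t - J (γ t)) (Jh h (γ t) - J (γ t))
      nlinarith)
  refine ⟨u, huc.continuousOn, fun t ht => ?_, ?_⟩
  · obtain ⟨s, hs, hst, hsM⟩ := hMs t ht
    have e0 := hrγ t ht s (Ioc_subset_Icc_self hs) (by rwa [Real.dist_eq, abs_sub_comm])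
    rw [dist_eq_norm] at e0
    have e1 := hud t ht
    have e2 := hu (γ t) ⟨t, ht, rfl⟩
    have e3 := gl_near hf_proper hτ hκ hJ (γ t) (γ s) hM0 hsM
    have e4 : u t - γ t = (u t - Jh h (γ t)) + (Jh h (γ t) - J (γ t)) + (J (γ t) - γ t) := by abel
    rw [e4]
    have := norm_add₃_le (a := u t - Jh h (γ t)) (b := Jh h (γ t) - J (γ t)) (c := J (γ t) - γ t)
    linarith
  · unfold Theta
    rw [if_pos ⟨hu0, hu1⟩]
    refine hua.trans ?_
    rw [← hact]
    conv_lhs => rw [← ENNReal.ofReal_toReal hfin]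
    conv_rhs => rw [← ENNReal.ofReal_toReal hfin]
    rw [← ENNReal.ofReal_mul (by positivity), ← ENNReal.ofReal_add (by positivity) (by positivity),
      ← ENNReal.ofReal_add (by positivity) hε.le]
    exact ENNReal.ofReal_le_ofReal hval

/-- the Γ-limsup inequality (existence of recovery sequences). -/
theorem statement2 (lam : ℝ) (fh : ℕ → H → EReal) (f : H → EReal)
    (hfh_proper : ∀ h, ProperFn (fh h)) (hfh_conv : ∀ h, LambdaConvex lam (fh h))
    (hfh_lsc : ∀ h, LowerSemicontinuous (fh h))
    (hf_proper : ProperFn f) (hf_conv : LambdaConvex lam f) (hf_lsc : LowerSemicontinuous f)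
    (hM : Mosco fh f)
    (xh0 xh1 : ℕ → H) (x0 x1 : H)
    (hx0 : Tendsto xh0 atTop (𝓝 x0)) (hx1 : Tendsto xh1 atTop (𝓝 x1))
    (hb0 : (⨆ h, gradNorm lam (fh h) (xh0 h)) ≠ ⊤)
    (hb1 : (⨆ h, gradNorm lam (fh h) (xh1 h)) ≠ ⊤)
    (γ : ℝ → H) (hγ : ContinuousOn γ (Icc 0 1)) :
    ∃ γh : ℕ → ℝ → H, (∀ h, ContinuousOn (γh h) (Icc 0 1)) ∧
      TendstoUniformlyOn γh γ atTop (Icc 0 1) ∧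
      Filter.limsup (fun h => Theta lam (fh h) (xh0 h) (xh1 h) (γh h)) atTop
        ≤ Theta lam f x0 x1 γ := by
  by_cases hfin : Theta lam f x0 x1 γ = ⊤
  · refine ⟨fun _ => γ, fun _ => hγ, ?_, by rw [hfin]; exact le_top⟩
    rw [Metric.tendstoUniformlyOn_iff]
    intro ε hε
    filter_upwards with h t _
    rwa [dist_self]
  have hend : γ 0 = x0 ∧ γ 1 = x1 := by
    by_contra hcon
    exact hfin (by unfold Theta; rw [if_neg hcon])
  have hTh : Theta lam f x0 x1 γ = actionFn lam f 0 1 γ := by unfold Theta; rw [if_pos hend]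
  rw [hTh] at hfin ⊢
  have hAC : IsACCurve 0 1 γ := by
    by_contra hcon
    exact hfin (by unfold actionFn; rw [dif_neg hcon])
  obtain ⟨g, hg, hγg⟩ := hAC
  have hgr : ∀ xh : ℕ → H, (⨆ h, gradNorm lam (fh h) (xh h)) ≠ ⊤ →
      ∃ p : ℕ → H, (∀ h, p h ∈ subdiff lam (fh h) (xh h)) ∧ ∀ h, ‖p h‖ ≤
        (⨆ h, gradNorm lam (fh h) (xh h)).toReal := by
    intro xh hb
    have hle : ∀ h, gradNorm lam (fh h) (xh h) ≤ ⨆ h, gradNorm lam (fh h) (xh h) :=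
      fun h => le_iSup (fun h => gradNorm lam (fh h) (xh h)) h
    have : ∀ h, ∃ p, p ∈ subdiff lam (fh h) (xh h) ∧ ‖p‖ ≤
        (⨆ h, gradNorm lam (fh h) (xh h)).toReal := by
      intro h
      obtain ⟨p, hp, hpn⟩ := gl_exists_grad (hfh_proper h) (ne_top_of_le_ne_top hb (hle h))
      refine ⟨p, hp, ?_⟩
      rw [← ENNReal.ofReal_le_iff_le_toReal hb, hpn]
      exact hle h
    choose p hp hpn using this
    exact ⟨p, hp, hpn⟩
  obtain ⟨p0, hp0, hp0C⟩ := hgr xh0 hb0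
  obtain ⟨p1, hp1, hp1C⟩ := hgr xh1 hb1
  rw [← hend.1] at hx0
  rw [← hend.2] at hx1
  obtain ⟨u, hu⟩ := gl_diag (fun h ε (u : ℝ → H) => ContinuousOn u (Icc 0 1) ∧
      (∀ t ∈ Icc (0 : ℝ) 1, ‖u t - γ t‖ ≤ ε) ∧
      Theta lam (fh h) (xh0 h) (xh1 h) u ≤ actionFn lam f 0 1 γ + ENNReal.ofReal ε) γ
    (fun h ε ε' u hεε hP => ⟨hP.1, fun t ht => (hP.2.1 t ht).trans hεε,
      hP.2.2.trans (by gcongr)⟩)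
    (fun ε hε => gl_key hfh_proper hfh_conv hfh_lsc hf_proper hf_conv hf_lsc hM
      (le_max_of_le_left ENNReal.toReal_nonneg) hx0 hx1
      hp0 (fun h => (hp0C h).trans (le_max_left _ _)) hp1
      (fun h => (hp1C h).trans (le_max_right _ _)) hγ hg hγg hfin hε)
  refine ⟨fun h => if ContinuousOn (u h) (Icc 0 1) then u h else γ, fun h => ?_, ?_, ?_⟩
  · by_cases hc : ContinuousOn (u h) (Icc 0 1)
    · simp only [if_pos hc]; exact hc
    · simp only [if_neg hc]; exact hγ
  · rw [Metric.tendstoUniformlyOn_iff]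
    intro ε hε
    filter_upwards [hu (ε / 2) (by positivity)] with h hh t ht
    rw [if_pos hh.1, dist_comm, dist_eq_norm]
    linarith [hh.2.1 t ht]
  · apply ENNReal.le_of_forall_pos_le_add
    intro ε hε _
    apply limsup_le_of_le
    · isBoundedDefault
    filter_upwards [hu ε (by exact_mod_cast hε)] with h hh
    rw [if_pos hh.1]
    simpa using hh.2.2

end
end

section
/- Let H be a real Hilbert space, λ ∈ ℝ, and let f : H → (-∞,∞] be proper, λ-convex and lower semicontinuous. Let δ > 0 and let γ : [0,δ] → H be absolutely continuous with I_f^δ(γ) < ∞ (so that γ(t) ∈ D(∂f) for a.e. t). Then ∫₀^δ ‖γ̇(t) − ∇f(γ(t))‖² dt = I_f^δ(γ) − 2(f(γ(δ)) − f(γ(0))). -/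
open Filter Topology MeasureTheory Set
open scoped ENNReal RealInnerProductSpace

noncomputable section

attribute [local instance] Classical.propDecidable

variable {H : Type*} [NormedAddCommGroup H] [InnerProductSpace ℝ H] [CompleteSpace H]

lemma subdiff_iff {lam : ℝ} {f : H → EReal} (hf : ProperFn f) {x p : H} :
    p ∈ subdiff lam f x ↔ f x ≠ ⊤ ∧ ∀ y, f y ≠ ⊤ →
      (f x).toReal + (⟪p, y - x⟫ + lam / 2 * ‖y - x‖ ^ 2) ≤ (f y).toReal := by
  constructor
  · rintro ⟨h1, h2⟩
    refine ⟨h1, fun y hy => ?_⟩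
    have := h2 y
    rw [← EReal.coe_toReal h1 (hf.2 x), ← EReal.coe_toReal hy (hf.2 y)] at this
    exact_mod_cast this
  · rintro ⟨h1, h2⟩
    refine ⟨h1, fun y => ?_⟩
    by_cases hy : f y = ⊤
    · rw [hy]; exact le_top
    have := h2 y hy
    rw [← EReal.coe_toReal h1 (hf.2 x), ← EReal.coe_toReal hy (hf.2 y)]
    exact_mod_cast this

lemma gradMin_spec {lam : ℝ} {f : H → EReal} (hf : ProperFn f) {x : H}
    (hne : (subdiff lam f x).Nonempty) :
    gradMin lam f x ∈ subdiff lam f x ∧ ∀ q ∈ subdiff lam f x, ‖gradMin lam f x‖ ≤ ‖q‖ := by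
  have hx : f x ≠ ⊤ := hne.some_mem.1
  have hcl : IsClosed (subdiff lam f x) := by
    have : subdiff lam f x = ⋂ (y : H) (_ : f y ≠ ⊤), {p : H |
        (f x).toReal + (⟪p, y - x⟫ + lam / 2 * ‖y - x‖ ^ 2) ≤ (f y).toReal} := by
      ext p
      rw [subdiff_iff hf]
      simp [hx]
    rw [this]
    refine isClosed_iInter fun y => isClosed_iInter fun _ => ?_
    exact isClosed_le (by fun_prop) continuous_const
  have hcv : Convex ℝ (subdiff lam f x) := by
    intro p hp q hq a b ha hb hab
    rw [subdiff_iff hf] at *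
    refine ⟨hx, fun y hy => ?_⟩
    have h1 := hp.2 y hy
    have h2 := hq.2 y hy
    rw [inner_add_left, real_inner_smul_left, real_inner_smul_left]
    obtain rfl : b = 1 - a := by linarith
    nlinarith
  obtain ⟨v, hv, hv2⟩ := exists_norm_eq_iInf_of_complete_convex hne hcl.isComplete hcv 0
  have hex : ∃ p ∈ subdiff lam f x, ∀ q ∈ subdiff lam f x, ‖p‖ ≤ ‖q‖ := by
    refine ⟨v, hv, fun q hq => ?_⟩
    have h3 : (⨅ w : subdiff lam f x, ‖(0:H) - w‖) ≤ ‖(0:H) - (⟨q, hq⟩ : subdiff lam f x)‖ :=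
      ciInf_le ⟨0, by rintro _ ⟨w, rfl⟩; exact norm_nonneg _⟩ (⟨q, hq⟩ : subdiff lam f x)
    rw [← hv2] at h3
    simpa using h3
  unfold gradMin
  rw [dif_pos hex]
  exact hex.choose_spec

lemma gradNorm_lsc {lam : ℝ} {f : H → EReal} (hf : ProperFn f) (hlsc : LowerSemicontinuous f) :
    LowerSemicontinuous (gradNorm lam f) := by
  rw [lowerSemicontinuous_iff_isClosed_preimage]
  intro c
  by_cases hc : c = ⊤
  · subst hc; simp
  have hmem : ∀ y, y ∈ gradNorm lam f ⁻¹' Iic c → (subdiff lam f y).Nonempty ∧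
      ‖gradMin lam f y‖ ≤ c.toReal := by
    intro y hy
    have hy' : gradNorm lam f y ≤ c := hy
    unfold gradNorm at hy'
    split_ifs at hy' with h
    · exact ⟨h, (ENNReal.ofReal_le_iff_le_toReal hc).1 hy'⟩
    · exact absurd (top_le_iff.1 hy') hc
  rw [isClosed_iff_ultrafilter]
  intro x u hux hsu
  set C := c.toReal with hC
  have hC0 : 0 ≤ C := ENNReal.toReal_nonneg
  set P := gradMin lam f with hP
  have hb : ∀ᶠ y in (u : Filter H), ‖P y‖ ≤ C := by
    filter_upwards [hsu] with y hy using (hmem y hy).2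
  have hlim : ∀ v : H, ∃ l : ℝ, |l| ≤ C * ‖v‖ ∧
      Tendsto (fun y => ⟪P y, v⟫) (u : Filter H) (𝓝 l) := by
    intro v
    have hk : IsCompact (Icc (-(C * ‖v‖)) (C * ‖v‖)) := isCompact_Icc
    have := hk.ultrafilter_le_nhds (u.map fun y => ⟪P y, v⟫) (by
      rw [le_principal_iff]
      change ∀ᶠ y in (u : Filter H), ⟪P y, v⟫ ∈ Icc (-(C * ‖v‖)) (C * ‖v‖)
      filter_upwards [hb] with y hy
      rw [mem_Icc, ← abs_le]
      exact (abs_real_inner_le_norm _ _).trans (by gcongr))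
    obtain ⟨l, hl, hl2⟩ := this
    exact ⟨l, abs_le.2 hl, hl2⟩
  choose L hLb hL using hlim
  let Ll : H →ₗ[ℝ] ℝ :=
    { toFun := L
      map_add' := fun v w => by
        refine tendsto_nhds_unique (hL (v + w)) ?_
        simpa only [inner_add_right] using (hL v).add (hL w)
      map_smul' := fun a v => by
        refine tendsto_nhds_unique (hL (a • v)) ?_
        simpa only [real_inner_smul_right, RingHom.id_apply, smul_eq_mul] using (hL v).const_mul a }
  let Lc : H →L[ℝ] ℝ := Ll.mkContinuous C hLb
  let p : H := (InnerProductSpace.toDual ℝ H).symm Lc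
  have hp : ∀ v, ⟪p, v⟫ = L v := fun v => by
    change ⟪(InnerProductSpace.toDual ℝ H).symm Lc, v⟫ = _
    rw [InnerProductSpace.toDual_symm_apply]; rfl
  have hpn : ‖p‖ ≤ C := by
    have : ‖p‖ = ‖Lc‖ := by simp [p]
    rw [this]
    exact Ll.mkContinuous_norm_le hC0 hLb
  have hkey : ∀ z, f z ≠ ⊤ → ∀ a : ℝ, (a : EReal) < f x →
      a + (⟪p, z - x⟫ + lam / 2 * ‖z - x‖ ^ 2) ≤ (f z).toReal := by
    intro z hz a ha
    have h1 : Tendsto (fun y : H => y) (u : Filter H) (𝓝 x) := hux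
    have hnz : Tendsto (fun y => ‖P y‖ * ‖x - y‖) (u : Filter H) (𝓝 0) := by
      have : Tendsto (fun y => C * ‖x - y‖) (u : Filter H) (𝓝 (C * ‖x - x‖)) :=
        ((tendsto_const_nhds.sub h1).norm).const_mul C
      rw [sub_self, norm_zero, mul_zero] at this
      refine squeeze_zero' (Eventually.of_forall fun y => by positivity) ?_ this
      filter_upwards [hb] with y hy
      gcongr
    have hz0 : Tendsto (fun y => ⟪P y, x - y⟫) (u : Filter H) (𝓝 0) :=
      squeeze_zero_norm (fun y => norm_inner_le_norm _ _) hnz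
    have h2 : Tendsto (fun y => a + ((⟪P y, z - x⟫ + ⟪P y, x - y⟫) + lam / 2 * ‖z - y‖ ^ 2))
        (u : Filter H) (𝓝 (a + ((L (z - x) + 0) + lam / 2 * ‖z - x‖ ^ 2))) :=
      (((hL _).add hz0).add ((((tendsto_const_nhds.sub h1).norm).pow 2).const_mul _)).const_add a
    rw [hp]
    rw [add_zero] at h2
    refine le_of_tendsto h2 ?_
    have h3 : ∀ᶠ y in (u : Filter H), (a : EReal) < f y := hux (hlsc x a ha)
    filter_upwards [h3, hsu] with y hy hy2
    have hg := (gradMin_spec hf (hmem y hy2).1).1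
    rw [subdiff_iff hf] at hg
    have h4 := hg.2 z hz
    have h5 : a ≤ (f y).toReal := by
      rw [← EReal.coe_toReal hg.1 (hf.2 y)] at hy
      exact_mod_cast hy.le
    rw [← inner_add_right, sub_add_sub_cancel]
    linarith
  have hxt : f x ≠ ⊤ := by
    intro hx
    obtain ⟨z, hz⟩ := hf.1
    have := hkey z hz ((f z).toReal + 1 - (⟪p, z - x⟫ + lam / 2 * ‖z - x‖ ^ 2))
      (by rw [hx]; exact EReal.coe_lt_top _)
    linarith
  have hps : p ∈ subdiff lam f x := by
    rw [subdiff_iff hf]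
    refine ⟨hxt, fun z hz => ?_⟩
    refine le_of_forall_pos_le_add fun ε hε => ?_
    have := hkey z hz ((f x).toReal - ε) (by
      conv_rhs => rw [← EReal.coe_toReal hxt (hf.2 x)]
      exact_mod_cast sub_lt_self _ hε)
    linarith
  have hne : (subdiff lam f x).Nonempty := ⟨p, hps⟩
  change gradNorm lam f x ≤ c
  unfold gradNorm
  rw [if_pos hne, ENNReal.ofReal_le_iff_le_toReal hc]
  exact ((gradMin_spec hf hne).2 p hps).trans hpn

lemma chain_point {lam : ℝ} {f : H → EReal} (hf : ProperFn f) {γ : ℝ → H} {t : ℝ} {v p : H}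
    {φ' : ℝ} (hfin : ∀ᶠ s in 𝓝 t, f (γ s) ≠ ⊤)
    (hφ : HasDerivAt (fun s => (f (γ s)).toReal) φ' t) (hγ : HasDerivAt γ v t)
    (hp : p ∈ subdiff lam f (γ t)) : φ' = ⟪p, v⟫ := by
  have hsub : HasDerivAt (fun s => γ s - γ t) v t := hγ.sub_const _
  have h1 : HasDerivAt (fun s => ⟪p, γ s - γ t⟫) ⟪p, v⟫ t := by
    have := (hasDerivAt_const t p).inner ℝ hsub
    simpa using this
  have h2 := (hsub.norm_sq).const_mul (lam / 2)
  have h3 := (hφ.sub (h1.add h2))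
  rw [subdiff_iff hf] at hp
  have hmin : IsLocalMin (fun s => (f (γ s)).toReal -
      (⟪p, γ s - γ t⟫ + lam / 2 * ‖γ s - γ t‖ ^ 2)) t := by
    filter_upwards [hfin] with s hs
    have := hp.2 _ hs
    simp
    linarith
  have := hmin.hasDerivAt_eq_zero h3
  simp at this
  linarith

lemma exists_le_avg {m : ℝ → ℝ} {a b : ℝ} (hab : a < b) (hm : IntervalIntegrable m volume a b)
    {p : ℝ → Prop} (hp : ∀ᵐ x, x ∈ Icc a b → p x) :
    ∃ x ∈ Ioc a b, p x ∧ m x * (b - a) ≤ ∫ r in a..b, m r := by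
  have hi : IntegrableOn m (Ioc a b) := (intervalIntegrable_iff_integrableOn_Ioc_of_le hab.le).1 hm
  have hne : volume.restrict (Ioc a b) ≠ 0 := by
    rw [Ne, Measure.restrict_eq_zero]; simp [hab]
  have hp' : ∀ᵐ x ∂(volume.restrict (Ioc a b)), x ∈ Ioc a b ∧ p x := by
    filter_upwards [ae_restrict_of_ae hp, ae_restrict_mem measurableSet_Ioc] with x h1 h2
    exact ⟨h2, h1 (Ioc_subset_Icc_self h2)⟩
  obtain ⟨x, hx, hx2⟩ := exists_notMem_null_le_average hne hi (ae_iff.1 hp')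
  have hx' : x ∈ Ioc a b ∧ p x := by
    by_contra h; exact hx h
  refine ⟨x, hx'.1, hx'.2, ?_⟩
  rw [setAverage_eq, ← intervalIntegral.integral_of_le hab.le, smul_eq_mul] at hx2
  have hv : volume.real (Ioc a b) = b - a := by simp [Measure.real, hab.le]
  rw [hv] at hx2
  have : 0 < b - a := by linarith
  calc m x * (b - a) ≤ ((b - a)⁻¹ * ∫ r in a..b, m r) * (b - a) := by gcongr
    _ = _ := by field_simp

lemma key_right {φ : ℝ → EReal} {m : ℝ → ℝ} {s t K : ℝ} (hst : s < t) (hK : 0 ≤ K)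
    (hm : IntervalIntegrable m volume s t) (hm0 : ∀ x, 0 ≤ m x)
    (hstep : ∀ᵐ x, x ∈ Icc s t → ∀ y ∈ Icc s t,
      φ x ≤ φ y + ((m x * |y - x| + K * |∫ r in x..y, m r| : ℝ) : EReal))
    (hlsc : LowerSemicontinuousWithinAt φ (Icc s t) s) :
    φ s ≤ φ t + (((3 + K) * ∫ r in s..t, m r : ℝ) : EReal) := by
  set a : ℕ → ℝ := fun k => s + (t - s) * (1 / 2) ^ k with ha
  have hpos : ∀ k, 0 < (t - s) * (1 / 2) ^ k := fun k => by
    have : 0 < t - s := by linarith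
    positivity
  have hsucc : ∀ k, (t - s) * (1 / 2 : ℝ) ^ (k + 1) = (t - s) * (1 / 2) ^ k / 2 := fun k => by ring
  have hlt : ∀ k, a (k + 1) < a k := fun k => by
    simp only [ha]; rw [hsucc]; linarith [hpos k]
  have hsa : ∀ k, s < a k := fun k => by simp only [ha]; linarith [hpos k]
  have hat : ∀ k, a k ≤ t := fun k => by
    induction k with
    | zero => simp [ha]
    | succ k ih => exact (hlt k).le.trans ih
  have hint : ∀ x y, x ∈ Icc s t → y ∈ Icc s t → IntervalIntegrable m volume x y := by
    intro x y hx hy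
    refine hm.mono_set ?_
    rw [uIcc_of_le hst.le]
    exact uIcc_subset_Icc hx hy
  have hamem : ∀ k, a k ∈ Icc s t := fun k => ⟨(hsa k).le, hat k⟩
  have hch : ∀ k, ∃ x ∈ Ioc (a (k + 1)) (a k), (∀ y ∈ Icc s t,
      φ x ≤ φ y + ((m x * |y - x| + K * |∫ r in x..y, m r| : ℝ) : EReal)) ∧
      m x * (a k - a (k + 1)) ≤ ∫ r in (a (k + 1))..(a k), m r := by
    intro k
    refine exists_le_avg (hlt k) (hint _ _ (hamem _) (hamem _)) ?_
    filter_upwards [hstep] with x hx h2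
    exact hx ⟨(hsa _).le.trans h2.1, h2.2.trans (hat _)⟩
  choose x hx hxs hxm using hch
  have hxmem : ∀ k, x k ∈ Icc s t := fun k => ⟨(hsa _).le.trans (hx k).1.le, (hx k).2.trans (hat _)⟩
  have htm : t ∈ Icc s t := ⟨hst.le, le_rfl⟩
  have hsm : s ∈ Icc s t := ⟨le_rfl, hst.le⟩
  have hnn : ∀ u v, u ≤ v → 0 ≤ ∫ r in u..v, m r := fun u v huv =>
    intervalIntegral.integral_nonneg huv fun r _ => hm0 r
  have hind : ∀ k, φ (x k) ≤ φ t +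
      ((3 * (∫ r in (a (k + 1))..t, m r) + K * ∫ r in (x k)..t, m r : ℝ) : EReal) := by
    intro k
    induction k with
    | zero =>
      refine (hxs 0 t htm).trans ?_
      refine add_le_add_right (EReal.coe_le_coe_iff.2 ?_) _
      have h0 : a 0 = t := by simp [ha]
      have h1 := hxm 0
      rw [h0] at h1
      have h2 := (hx 0).1
      have h3 := (hxmem 0).2
      have h4 := hnn (x 0) t h3
      have h5 := hnn (a 1) t (hat 1)
      rw [abs_of_nonneg h4, abs_of_nonneg (by linarith)]
      have h6 : m (x 0) * (t - x 0) ≤ m (x 0) * (t - a (0 + 1)) :=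
        mul_le_mul_of_nonneg_left (by linarith) (hm0 _)
      simp only [zero_add] at *
      linarith
    | succ k ih =>
      refine (hxs (k + 1) (x k) (hxmem k)).trans ?_
      refine (add_le_add_left ih _).trans ?_
      rw [add_assoc, ← EReal.coe_add]
      refine add_le_add_right (EReal.coe_le_coe_iff.2 ?_) _
      have hle : x (k + 1) ≤ x k := (hx (k + 1)).2.trans (hx k).1.le
      have h1 := hxm (k + 1)
      rw [abs_of_nonneg (hnn _ _ hle), abs_of_nonneg (by linarith)]
      have h2 : x k - x (k + 1) ≤ 3 * (a (k + 1) - a (k + 1 + 1)) := by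
        have e1 := (hx k).2
        have e2 := (hx (k + 1)).1
        have e3 := hsucc k
        have e4 := hsucc (k + 1)
        simp only [ha] at e1 e2 ⊢
        linarith
      have h3 := mul_le_mul_of_nonneg_left h2 (hm0 (x (k + 1)))
      have h4 := intervalIntegral.integral_add_adjacent_intervals
        (hint _ _ (hxmem (k + 1)) (hxmem k)) (hint _ _ (hxmem k) htm)
      have h5 := intervalIntegral.integral_add_adjacent_intervals
        (hint _ _ (hamem (k + 1 + 1)) (hamem (k + 1))) (hint _ _ (hamem (k + 1)) htm)
      rw [← h4, ← h5]
      linarith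
  have hbd : ∀ k, φ (x k) ≤ φ t + (((3 + K) * ∫ r in s..t, m r : ℝ) : EReal) := by
    intro k
    refine (hind k).trans ?_
    refine add_le_add_right (EReal.coe_le_coe_iff.2 ?_) _
    have h4 := intervalIntegral.integral_add_adjacent_intervals
        (hint _ _ hsm (hxmem k)) (hint _ _ (hxmem k) htm)
    have h5 := intervalIntegral.integral_add_adjacent_intervals
        (hint _ _ hsm (hamem (k + 1))) (hint _ _ (hamem (k + 1)) htm)
    have h6 := hnn _ _ (hxmem k).1
    have h7 := hnn _ _ (hamem (k + 1)).1
    have : K * (∫ r in (x k)..t, m r) ≤ K * ∫ r in s..t, m r :=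
      mul_le_mul_of_nonneg_left (by linarith) hK
    linarith
  have hxt : Tendsto x atTop (𝓝[Icc s t] s) := by
    refine tendsto_nhdsWithin_iff.2 ⟨?_, Eventually.of_forall hxmem⟩
    have : Tendsto a atTop (𝓝 (s + (t - s) * 0)) :=
      ((tendsto_pow_atTop_nhds_zero_of_lt_one (by norm_num) (by norm_num)).const_mul _).const_add _
    rw [mul_zero, add_zero] at this
    exact tendsto_of_tendsto_of_tendsto_of_le_of_le tendsto_const_nhds this
      (fun k => (hxmem k).1) (fun k => (hx k).2)
  by_contra hcon
  push Not at hcon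
  obtain ⟨k, hk⟩ := (hxt.eventually (hlsc _ hcon)).exists
  exact absurd (hbd k) (not_le.2 hk)

lemma key_left {φ : ℝ → EReal} {m : ℝ → ℝ} {s t K : ℝ} (hst : s < t) (hK : 0 ≤ K)
    (hm : IntervalIntegrable m volume s t) (hm0 : ∀ x, 0 ≤ m x)
    (hstep : ∀ᵐ x, x ∈ Icc s t → ∀ y ∈ Icc s t,
      φ x ≤ φ y + ((m x * |y - x| + K * |∫ r in x..y, m r| : ℝ) : EReal))
    (hlsc : LowerSemicontinuousWithinAt φ (Icc s t) t) :
    φ t ≤ φ s + (((3 + K) * ∫ r in s..t, m r : ℝ) : EReal) := by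
  have := key_right (φ := fun x => φ (-x)) (m := fun x => m (-x)) (s := -t) (t := -s) (K := K)
    (by linarith) hK ((IntervalIntegrable.iff_comp_neg (by simp)).1 hm.symm) (fun x => hm0 _) ?_ ?_
  · simpa using this
  · have h2 := (Measure.measurePreserving_neg (volume : Measure ℝ)).quasiMeasurePreserving.ae hstep
    filter_upwards [h2] with x hx hxm y hy
    have := hx ⟨by linarith [hxm.2], by linarith [hxm.1]⟩ (-y) ⟨by linarith [hy.2], by linarith [hy.1]⟩
    rw [intervalIntegral.integral_comp_neg, intervalIntegral.integral_symm, abs_neg]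
    rwa [show |y - x| = |-y - -x| by rw [← abs_neg]; congr 1; ring]
  · intro y hy
    simp only [neg_neg] at hy
    have h3 := hlsc y hy
    have h4 : Tendsto (fun x : ℝ => -x) (𝓝[Icc (-t) (-s)] (-t)) (𝓝[Icc s t] t) := by
      refine tendsto_nhdsWithin_iff.2 ⟨?_, ?_⟩
      · have : Tendsto (fun x : ℝ => -x) (𝓝 (-t)) (𝓝 (- -t)) := tendsto_neg _
        rw [neg_neg] at this
        exact this.mono_left nhdsWithin_le_nhds
      · filter_upwards [self_mem_nhdsWithin] with x hx
        exact ⟨by linarith [hx.2], by linarith [hx.1]⟩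
    exact h4.eventually h3

lemma ac_of_dist_le {φ M : ℝ → ℝ} {a b K : ℝ} (hM : AbsolutelyContinuousOnInterval M a b)
    (h : ∀ x ∈ uIcc a b, ∀ y ∈ uIcc a b, dist (φ x) (φ y) ≤ K * dist (M x) (M y)) :
    AbsolutelyContinuousOnInterval φ a b := by
  unfold AbsolutelyContinuousOnInterval at *
  have h2 := hM.const_mul K
  rw [mul_zero] at h2
  refine squeeze_zero' (Eventually.of_forall fun E => Finset.sum_nonneg fun _ _ => dist_nonneg) ?_ h2
  filter_upwards [mem_inf_of_right (mem_principal_self _)] with E hE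
  rw [Finset.mul_sum]
  refine Finset.sum_le_sum fun i hi => ?_
  exact h _ (hE.1 i hi).1 _ (hE.1 i hi).2

lemma hasDerivAt_of_prim {δ : ℝ} (hδ : 0 < δ) {γ g : ℝ → H}
    (hg_int : IntegrableOn g (Icc 0 δ))
    (hg_prim : ∀ t ∈ Icc 0 δ, γ t = γ 0 + ∫ s in (0:ℝ)..t, g s) :
    ∀ᵐ t, t ∈ Ioo 0 δ → HasDerivAt γ (g t) t := by
  have hi : IntervalIntegrable g volume 0 δ := (intervalIntegrable_iff_integrableOn_Icc_of_le hδ.le).2 hg_int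
  filter_upwards [hi.ae_hasDerivAt_integral] with t ht htm
  rw [uIcc_of_le hδ.le] at ht
  have := (ht (Ioo_subset_Icc_self htm) 0 ⟨le_rfl, hδ.le⟩).const_add (γ 0)
  refine this.congr_of_eventuallyEq ?_
  filter_upwards [Ioo_mem_nhds htm.1 htm.2] with s hs
  exact hg_prim s (Ioo_subset_Icc_self hs)

/-- the two action functionals differ by the null Lagrangian `2(f∘γ)'`. -/
theorem statement15 (lam : ℝ) (f : H → EReal)
    (hf : ProperFn f) (hconv : LambdaConvex lam f) (hlsc : LowerSemicontinuous f)
    (δ : ℝ) (hδ : 0 < δ) (γ : ℝ → H) (g : ℝ → H)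
    (hg_int : IntegrableOn g (Icc 0 δ))
    (hg_prim : ∀ t ∈ Icc 0 δ, γ t = γ 0 + ∫ s in (0:ℝ)..t, g s)
    (hfin : actionFn lam f 0 δ γ ≠ ⊤) :
    ∫⁻ t in Ioc (0:ℝ) δ, ENNReal.ofReal (‖g t - gradMin lam f (γ t)‖ ^ 2)
      = ENNReal.ofReal ((actionFn lam f 0 δ γ).toReal
          - 2 * ((f (γ δ)).toReal - (f (γ 0)).toReal)) := by
  have hAC : IsACCurve 0 δ γ := ⟨g, hg_int, hg_prim⟩
  set G : ℝ → ℝ≥0∞ := fun t => gradNorm lam f (γ t) with hG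
  set F : ℝ → ℝ≥0∞ := fun t => ENNReal.ofReal (‖g t‖ ^ 2) + G t ^ 2 with hF
  have hi : IntervalIntegrable g volume 0 δ :=
    (intervalIntegrable_iff_integrableOn_Icc_of_le hδ.le).2 hg_int
  have hgi : IntegrableOn g (Ioc 0 δ) := hg_int.mono_set Ioc_subset_Icc_self
  have hder := hasDerivAt_of_prim hδ hg_int hg_prim
  have hneδ : ∀ᵐ t : ℝ, t ≠ δ := by simp [ae_iff, measure_singleton]
  -- the action in terms of `g`
  have hact : actionFn lam f 0 δ γ = ∫⁻ t in Ioc 0 δ, F t := by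
    unfold actionFn
    rw [dif_pos hAC]
    have hder' := hasDerivAt_of_prim hδ hAC.choose_spec.1 hAC.choose_spec.2
    refine lintegral_congr_ae ?_
    filter_upwards [ae_restrict_of_ae hder, ae_restrict_of_ae hder', ae_restrict_of_ae hneδ,
      ae_restrict_mem measurableSet_Ioc] with t h1 h2 h3 h4
    have ht : t ∈ Ioo 0 δ := ⟨h4.1, lt_of_le_of_ne h4.2 h3⟩
    rw [(h2 ht).unique (h1 ht)]
  rw [hact] at hfin ⊢
  -- continuity of `γ`
  have hγc : ContinuousOn γ (Icc 0 δ) := by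
    have h1 : ContinuousOn (fun t => γ 0 + ∫ s in (0:ℝ)..t, g s) (Icc 0 δ) := by
      refine continuousOn_const.add ?_
      have := intervalIntegral.continuousOn_primitive_interval (a := 0) (b := δ) (f := g)
        (μ := volume) (by rwa [uIcc_of_le hδ.le])
      rwa [uIcc_of_le hδ.le] at this
    exact h1.congr hg_prim
  -- measurability
  have hGm : AEMeasurable G (volume.restrict (Ioc 0 δ)) := by
    have hc : Continuous (IccExtend hδ.le ((Icc 0 δ).domRestrict γ)) :=
      (continuousOn_iff_continuous_domRestrict.1 hγc).Icc_extend'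
    have hl := ((gradNorm_lsc (lam := lam) hf hlsc).comp hc).measurable
    refine ⟨_, hl, ?_⟩
    filter_upwards [ae_restrict_mem measurableSet_Ioc] with t ht
    simp [hG, IccExtend_of_mem hδ.le _ (Ioc_subset_Icc_self ht), Set.domRestrict]
  have hgm : AEMeasurable (fun t => ENNReal.ofReal (‖g t‖ ^ 2)) (volume.restrict (Ioc 0 δ)) :=
    (hgi.1.norm.aemeasurable.pow_const 2).ennreal_ofReal
  have hFm : AEMeasurable F (volume.restrict (Ioc 0 δ)) := hgm.add (hGm.pow_const 2)
  have hFt : ∀ᵐ t ∂(volume.restrict (Ioc 0 δ)), F t < ⊤ := ae_lt_top' hFm hfin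
  have hFi : IntegrableOn (fun t => (F t).toReal) (Ioc 0 δ) :=
    integrable_toReal_of_lintegral_ne_top hFm hfin
  have hgood : ∀ᵐ t ∂(volume.restrict (Ioc 0 δ)), (subdiff lam f (γ t)).Nonempty ∧
      (F t).toReal = ‖g t‖ ^ 2 + ‖gradMin lam f (γ t)‖ ^ 2 := by
    filter_upwards [hFt] with t ht
    have hGt : G t ≠ ⊤ := by
      intro h
      simp [hF, h] at ht
    have hne : (subdiff lam f (γ t)).Nonempty := by
      by_contra h
      exact hGt (by simp only [hG, gradNorm, if_neg h])
    refine ⟨hne, ?_⟩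
    have h2 : G t = ENNReal.ofReal ‖gradMin lam f (γ t)‖ := by
      simp only [hG, gradNorm, if_pos hne]
    simp only [hF]
    rw [h2, ← ENNReal.ofReal_pow (norm_nonneg _), ← ENNReal.ofReal_add (by positivity) (by positivity),
      ENNReal.toReal_ofReal (by positivity)]
  -- the control function
  set m : ℝ → ℝ := fun t => 1 + (F t).toReal with hm
  have hmi : IntervalIntegrable m volume 0 δ := by
    refine (intervalIntegrable_const).add ?_
    exact (intervalIntegrable_iff_integrableOn_Ioc_of_le hδ.le).2 hFi
  have hm0 : ∀ t, 0 ≤ m t := fun t => by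
    have : 0 ≤ (F t).toReal := ENNReal.toReal_nonneg
    simp only [hm]; linarith
  set L : ℝ := ∫ r in (0:ℝ)..δ, ‖g r‖ with hL
  have hL0 : 0 ≤ L := intervalIntegral.integral_nonneg hδ.le fun _ _ => norm_nonneg _
  have hsubi : ∀ x y, x ∈ Icc 0 δ → y ∈ Icc 0 δ → uIcc x y ⊆ uIcc 0 δ := by
    intro x y hx hy
    rw [uIcc_of_le hδ.le]
    exact uIcc_subset_Icc hx hy
  have hgood' : ∀ᵐ t, t ∈ Ioc 0 δ → (subdiff lam f (γ t)).Nonempty ∧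
      (F t).toReal = ‖g t‖ ^ 2 + ‖gradMin lam f (γ t)‖ ^ 2 :=
    (ae_restrict_iff' measurableSet_Ioc).1 hgood
  have hDle : ∀ x ∈ Icc 0 δ, ∀ y ∈ Icc 0 δ, ‖γ y - γ x‖ ≤ |∫ r in x..y, ‖g r‖| := by
    intro x hx y hy
    have h0 : (0:ℝ) ∈ Icc 0 δ := ⟨le_rfl, hδ.le⟩
    rw [hg_prim x hx, hg_prim y hy, add_sub_add_left_eq_sub,
      intervalIntegral.integral_interval_sub_left (hi.mono_set (hsubi _ _ h0 hy))
        (hi.mono_set (hsubi _ _ h0 hx))]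
    exact intervalIntegral.norm_integral_le_abs_integral_norm
  have hL1 : ∀ x ∈ Icc 0 δ, ∀ y ∈ Icc 0 δ, |∫ r in x..y, ‖g r‖| ≤ L := by
    intro x hx y hy
    rw [← abs_of_nonneg hL0]
    refine intervalIntegral.abs_integral_mono_interval ?_ (Eventually.of_forall fun _ => norm_nonneg _)
      hi.norm
    rw [uIoc_of_le hδ.le]
    rw [uIoc]
    exact Ioc_subset_Ioc (le_min hx.1 hy.1) (max_le hx.2 hy.2)
  have hae : ∀ {u v : ℝ → ℝ}, (IntervalIntegrable u volume 0 δ) → (IntervalIntegrable v volume 0 δ) →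
      (∀ r, 0 ≤ u r) → (∀ᵐ r, r ∈ Ioc 0 δ → u r ≤ v r) → ∀ x ∈ Icc 0 δ, ∀ y ∈ Icc 0 δ,
      |∫ r in x..y, u r| ≤ |∫ r in x..y, v r| := by
    intro u v hu hv hu0 huv x hx y hy
    have hsub : uIoc x y ⊆ Ioc 0 δ := by
      rw [uIoc]
      exact Ioc_subset_Ioc (le_min hx.1 hy.1) (max_le hx.2 hy.2)
    rw [intervalIntegral.abs_integral_eq_abs_integral_uIoc,
      intervalIntegral.abs_integral_eq_abs_integral_uIoc]
    have h1 : 0 ≤ ∫ r in uIoc x y, u r := integral_nonneg hu0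
    rw [abs_of_nonneg h1]
    refine (integral_mono_ae ?_ ?_ ?_).trans (le_abs_self _)
    · exact (intervalIntegrable_iff.1 (hu.mono_set (hsubi _ _ hx hy)))
    · exact (intervalIntegrable_iff.1 (hv.mono_set (hsubi _ _ hx hy)))
    · filter_upwards [ae_restrict_of_ae huv, ae_restrict_mem measurableSet_uIoc] with r h2 h3
      exact h2 (hsub h3)
  have hgm1 : ∀ᵐ r, r ∈ Ioc 0 δ → ‖g r‖ ≤ m r := by
    filter_upwards [hgood'] with r hr hrm
    simp only [hm]
    rw [(hr hrm).2]
    nlinarith [sq_nonneg (‖g r‖ - 1), sq_nonneg ‖gradMin lam f (γ r)‖, sq_nonneg (‖g r‖)]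
  set K : ℝ := 1 + |lam| / 2 * L with hK
  have hK0 : 0 ≤ K := by positivity
  set φ : ℝ → EReal := fun t => f (γ t) with hφ
  have h0ae : ∀ᵐ t : ℝ, t ≠ 0 := by simp [ae_iff, measure_singleton]
  have hstep : ∀ᵐ x, x ∈ Icc 0 δ → ∀ y ∈ Icc 0 δ,
      φ x ≤ φ y + ((m x * |y - x| + K * |∫ r in x..y, m r| : ℝ) : EReal) := by
    filter_upwards [hgood', h0ae] with x hx hx0 hxm y hy
    have hx' : x ∈ Ioc 0 δ := ⟨lt_of_le_of_ne hxm.1 (Ne.symm hx0), hxm.2⟩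
    obtain ⟨hne, hFx⟩ := hx hx'
    have hmem := (gradMin_spec hf hne).1
    rw [subdiff_iff hf] at hmem
    by_cases hyt : f (γ y) = ⊤
    · simp only [hφ, hyt]
      rw [EReal.top_add_coe]; exact le_top
    have h1 := hmem.2 _ hyt
    simp only [hφ]
    rw [← EReal.coe_toReal hmem.1 (hf.2 _), ← EReal.coe_toReal hyt (hf.2 _), ← EReal.coe_add,
      EReal.coe_le_coe_iff]
    set p := gradMin lam f (γ x) with hp
    set D := ‖γ y - γ x‖ with hD
    set A := |∫ r in x..y, ‖g r‖| with hA
    set B := |∫ r in x..y, m r| with hB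
    have e1 : D ≤ A := hDle x hxm y hy
    have e2 : A ≤ L := hL1 x hxm y hy
    have e3 : A ≤ B := hae hi.norm hmi (fun _ => norm_nonneg _) hgm1 x hxm y hy
    have e4 : ‖p‖ * A ≤ m x * |y - x| + B := by
      have hc : IntervalIntegrable (fun _ : ℝ => m x) volume 0 δ := intervalIntegrable_const
      have h5 : |∫ r in x..y, ‖p‖ * ‖g r‖| ≤ |∫ r in x..y, (m x + m r)| := by
        refine hae (hi.norm.const_mul _) (hc.add hmi) (fun _ => by positivity) ?_ x hxm y hy
        filter_upwards [hgood'] with r hr hrm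
        simp only [hm]
        rw [(hr hrm).2, hFx]
        nlinarith [sq_nonneg (‖g r‖ - ‖p‖), sq_nonneg ‖gradMin lam f (γ r)‖, sq_nonneg ‖g x‖,
          sq_nonneg ‖g r‖, sq_nonneg ‖p‖]
      rw [intervalIntegral.integral_const_mul, abs_mul, abs_of_nonneg (norm_nonneg p),
        intervalIntegral.integral_add (hc.mono_set (hsubi _ _ hxm hy))
          (hmi.mono_set (hsubi _ _ hxm hy)), intervalIntegral.integral_const, smul_eq_mul] at h5
      refine h5.trans ((abs_add_le _ _).trans ?_)
      rw [abs_mul, abs_of_nonneg (hm0 x), mul_comm]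
    have e5 : -(‖p‖ * D) ≤ ⟪p, γ y - γ x⟫ := (abs_le.1 (abs_real_inner_le_norm _ _)).1
    have e6 : ‖p‖ * D ≤ ‖p‖ * A := by gcongr
    have hD0 : 0 ≤ D := norm_nonneg _
    have e7 : -(|lam| / 2 * L * B) ≤ lam / 2 * D ^ 2 := by
      have e8 : D ^ 2 ≤ L * B := by
        rw [pow_two]
        exact mul_le_mul (e1.trans e2) (e1.trans e3) hD0 hL0
      have e9 := neg_abs_le lam
      have e10 := abs_nonneg lam
      nlinarith [sq_nonneg D, mul_le_mul_of_nonneg_left e8 e10,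
        mul_le_mul_of_nonneg_right e9 (sq_nonneg D)]
    simp only [hK]
    linarith
  have hls : LowerSemicontinuousOn φ (Icc 0 δ) := fun s hs y hy =>
    (hγc s hs).eventually (hlsc (γ s) y hy)
  have hboth : ∀ s t, s ∈ Icc 0 δ → t ∈ Icc 0 δ → s < t →
      φ s ≤ φ t + (((3 + K) * ∫ r in s..t, m r : ℝ) : EReal) ∧
      φ t ≤ φ s + (((3 + K) * ∫ r in s..t, m r : ℝ) : EReal) := by
    intro s t hs ht hst
    have hsub : Icc s t ⊆ Icc 0 δ := Icc_subset_Icc hs.1 ht.2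
    have hst' : ∀ᵐ x, x ∈ Icc s t → ∀ y ∈ Icc s t,
      φ x ≤ φ y + ((m x * |y - x| + K * |∫ r in x..y, m r| : ℝ) : EReal) := by
      filter_upwards [hstep] with x hx hxm y hy using hx (hsub hxm) y (hsub hy)
    have hmi' := hmi.mono_set (hsubi _ _ hs ht)
    exact ⟨key_right hst hK0 hmi' hm0 hst' ((hls s hs).mono hsub),
      key_left hst hK0 hmi' hm0 hst' ((hls t ht).mono hsub)⟩
  -- finiteness
  have hfinall : ∀ s ∈ Icc 0 δ, φ s ≠ ⊤ := by
    obtain ⟨t0, ht0, hgt0, -⟩ := exists_le_avg hδ hmi (p := fun t => t ≠ 0 → φ t ≠ ⊤) (by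
      filter_upwards [hgood'] with t ht htm h0
      exact ((ht ⟨lt_of_le_of_ne htm.1 (Ne.symm h0), htm.2⟩).1).some_mem.1)
    have h1 := hgt0 ht0.1.ne'
    have ht0' := Ioc_subset_Icc_self ht0
    intro s hs
    rcases lt_trichotomy s t0 with h | h | h
    · refine ne_top_of_le_ne_top ?_ (hboth s t0 hs ht0' h).1
      exact (EReal.add_lt_top h1 (EReal.coe_ne_top _)).ne
    · rw [h]; exact h1
    · refine ne_top_of_le_ne_top ?_ (hboth t0 s ht0' hs h).2
      exact (EReal.add_lt_top h1 (EReal.coe_ne_top _)).ne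
  -- absolute continuity
  set ψ : ℝ → ℝ := fun t => (f (γ t)).toReal with hψ
  have hφψ : ∀ s ∈ Icc 0 δ, φ s = (ψ s : EReal) := fun s hs =>
    (EReal.coe_toReal (hfinall s hs) (hf.2 _)).symm
  have h0m : (0:ℝ) ∈ Icc 0 δ := ⟨le_rfl, hδ.le⟩
  have hψd : ∀ s t, s ∈ Icc 0 δ → t ∈ Icc 0 δ → s < t →
      dist (ψ s) (ψ t) ≤ (3 + K) * dist (∫ r in (0:ℝ)..s, m r) (∫ r in (0:ℝ)..t, m r) := by
    intro s t hs ht hst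
    obtain ⟨h1, h2⟩ := hboth s t hs ht hst
    rw [hφψ s hs, hφψ t ht, ← EReal.coe_add, EReal.coe_le_coe_iff] at h1 h2
    have h3 : 0 ≤ ∫ r in s..t, m r := intervalIntegral.integral_nonneg hst.le fun r _ => hm0 r
    rw [dist_comm (∫ r in (0:ℝ)..s, m r), Real.dist_eq, Real.dist_eq,
      intervalIntegral.integral_interval_sub_left (hmi.mono_set (hsubi _ _ h0m ht))
        (hmi.mono_set (hsubi _ _ h0m hs)), abs_of_nonneg h3, abs_le]
    constructor <;> linarith
  have hac : AbsolutelyContinuousOnInterval ψ 0 δ := by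
    refine ac_of_dist_le (K := 3 + K)
      (hmi.absolutelyContinuousOnInterval_intervalIntegral (c := 0) (by simp)) ?_
    intro x hx y hy
    rw [uIcc_of_le hδ.le] at hx hy
    rcases lt_trichotomy x y with h | h | h
    · exact hψd x y hx hy h
    · simp [h]
    · rw [dist_comm (ψ x), dist_comm (∫ r in (0:ℝ)..x, m r)]
      exact hψd y x hy hx h
  have hftc := hac.integral_deriv_eq_sub
  have hdi : IntegrableOn (deriv ψ) (Ioc 0 δ) :=
    (intervalIntegrable_iff_integrableOn_Ioc_of_le hδ.le).1 hac.intervalIntegrable_deriv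
  rw [intervalIntegral.integral_of_le hδ.le] at hftc
  have hchain : ∀ᵐ t ∂(volume.restrict (Ioc 0 δ)),
      (F t).toReal - 2 * deriv ψ t = ‖g t - gradMin lam f (γ t)‖ ^ 2 := by
    filter_upwards [hgood, ae_restrict_of_ae hder, ae_restrict_of_ae hneδ,
      ae_restrict_of_ae hac.ae_differentiableAt, ae_restrict_mem measurableSet_Ioc]
      with t h1 h2 h3 h4 h5
    have ht : t ∈ Ioo 0 δ := ⟨h5.1, lt_of_le_of_ne h5.2 h3⟩
    have hd := (h4 (by rw [uIcc_of_le hδ.le]; exact Ioc_subset_Icc_self h5)).hasDerivAt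
    have hev : ∀ᶠ s in 𝓝 t, f (γ s) ≠ ⊤ := by
      filter_upwards [Ioo_mem_nhds ht.1 ht.2] with s hs using hfinall s (Ioo_subset_Icc_self hs)
    have := chain_point hf hev hd (h2 ht) (gradMin_spec hf h1.1).1
    rw [h1.2, this, norm_sub_sq_real, real_inner_comm]
    ring
  have e1 : ∫⁻ t in Ioc (0:ℝ) δ, ENNReal.ofReal (‖g t - gradMin lam f (γ t)‖ ^ 2)
      = ∫⁻ t in Ioc (0:ℝ) δ, ENNReal.ofReal ((F t).toReal - 2 * deriv ψ t) := by
    refine lintegral_congr_ae ?_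
    filter_upwards [hchain] with t ht
    rw [ht]
  have hui : IntegrableOn (fun t => (F t).toReal - 2 * deriv ψ t) (Ioc 0 δ) :=
    hFi.sub (hdi.const_mul 2)
  rw [e1, ← ofReal_integral_eq_lintegral_ofReal hui (by
    filter_upwards [hchain] with t ht
    rw [ht]; exact sq_nonneg _), integral_sub hFi (hdi.const_mul 2), integral_const_mul, hftc,
    integral_toReal hFm hFt]

end
end

section
/- Let H be a real Hilbert space, λ ∈ ℝ, and let f : H → (-∞,∞] be proper, λ-convex and lower semicontinuous. Let τ > 0 be such that (1 + τλ)^{-1} ≤ 2. Then for all δ > 0 and all x_0, x_δ ∈ H with ∂f(x_0) ≠ ∅ and ∂f(x_δ) ≠ ∅, one has Γ_δ(x_0, x_δ) ≤ 2δ · min(|∇f|²(x_0), |∇f|²(x_δ)) + (40/δ + 12δ/τ²)‖x_δ − x_0‖² + (12δ + 40τ²/δ)‖∇f(x_δ) − ∇f(x_0)‖². -/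
open Filter Topology MeasureTheory Set
open scoped ENNReal RealInnerProductSpace

noncomputable section

attribute [local instance] Classical.propDecidable

variable {H : Type*} [NormedAddCommGroup H] [InnerProductSpace ℝ H] [CompleteSpace H]

/-- Lipschitz curves in a Hilbert space are integrals of an `L²` derivative. -/
lemma isACCurve_of_lipschitz {γ : ℝ → H} {K : NNReal} (hγ : LipschitzWith K γ) (a b : ℝ) :
    IsACCurve a b γ := by
  have hcont : Continuous γ := hγ.continuous
  let μ : Measure ℝ := volume.restrict (Icc a b)
  have : IsFiniteMeasure μ := ⟨by simp [μ]⟩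
  let D : ℕ → ℝ → H := fun n t => ((n : ℝ) + 1) • (γ (t + ((n : ℝ) + 1)⁻¹) - γ t)
  have hDc : ∀ n, Continuous (D n) := fun n => by fun_prop
  have hDb : ∀ n t, ‖D n t‖ ≤ K := by
    intro n t
    have h1 := hγ.dist_le_mul (t + ((n : ℝ) + 1)⁻¹) t
    have hp : (0 : ℝ) < (n : ℝ) + 1 := by positivity
    rw [dist_eq_norm, dist_eq_norm, add_sub_cancel_left, Real.norm_of_nonneg (by positivity)] at h1
    rw [norm_smul, Real.norm_of_nonneg hp.le]
    calc ((n : ℝ) + 1) * ‖γ (t + ((n : ℝ) + 1)⁻¹) - γ t‖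
        ≤ ((n : ℝ) + 1) * (K * ((n : ℝ) + 1)⁻¹) := by gcongr
      _ = K := by field_simp
  have hmem : ∀ n, MemLp (D n) 2 μ := fun n =>
    MemLp.of_bound (hDc n).aestronglyMeasurable K (Eventually.of_forall (hDb n))
  let L : ℕ → Lp H 2 μ := fun n => (hmem n).toLp
  obtain ⟨R, hR⟩ : ∃ R : ℝ, ∀ n, ‖L n‖ ≤ R := by
    refine ⟨_, fun n => Lp.norm_le_of_ae_bound (C := (K : ℝ)) K.2 ?_⟩
    filter_upwards [(hmem n).coeFn_toLp] with t ht
    rw [ht]; exact hDb n t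
  let W : ℕ → WeakDual ℝ (Lp H 2 μ) := fun n =>
    StrongDual.toWeakDual (InnerProductSpace.toDual ℝ (Lp H 2 μ) (L n))
  let U : Ultrafilter ℕ := hyperfilter ℕ
  have hU : (U : Filter ℕ) ≤ atTop := by
    rw [← Nat.cofinite_eq_atTop]; exact hyperfilter_le_cofinite
  have hcpt := WeakDual.isCompact_closedBall (𝕜 := ℝ) (E := Lp H 2 μ) 0 R
  obtain ⟨w, -, hw⟩ := hcpt.ultrafilter_le_nhds (U.map W) (by
    rw [le_principal_iff]
    refine Filter.mem_map.2 (Eventually.of_forall fun n => ?_)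
    show W n ∈ _
    simp only [W, mem_preimage, Metric.mem_closedBall, dist_zero_right]
    exact ((InnerProductSpace.toDual ℝ (Lp H 2 μ)).norm_map (L n)).le.trans (hR n))
  have hw' : Tendsto W U (𝓝 w) := hw
  have hev : ∀ φ : Lp H 2 μ, Tendsto (fun n => ⟪L n, φ⟫) U (𝓝 (w φ)) := fun φ =>
    ((WeakDual.eval_continuous φ).tendsto w).comp hw'
  let g : Lp H 2 μ := (InnerProductSpace.toDual ℝ (Lp H 2 μ)).symm (WeakDual.toStrongDual w)
  have hg : ∀ φ, ⟪g, φ⟫ = w φ := fun φ => InnerProductSpace.toDual_symm_apply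
  have hgint : Integrable (g : ℝ → H) μ := (Lp.memLp g).integrable (by norm_num)
  refine ⟨g, hgint, fun t ht => ?_⟩
  have hres : μ.restrict (Ioc a t) = volume.restrict (Ioc a t) := by
    simp only [μ]
    rw [Measure.restrict_restrict measurableSet_Ioc, inter_eq_left.2]
    exact fun s hs => ⟨hs.1.le, hs.2.trans ht.2⟩
  -- FTC for continuous functions
  have hF : ∀ x, Tendsto (fun n : ℕ => ((n : ℝ) + 1) • ∫ s in x..x + ((n : ℝ) + 1)⁻¹, γ s)
      atTop (𝓝 (γ x)) := by
    intro x
    have hd : HasDerivAt (fun u => ∫ s in x..u, γ s) (γ x) x :=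
      intervalIntegral.integral_hasDerivAt_right (hcont.intervalIntegrable _ _)
        (hcont.stronglyMeasurableAtFilter _ _) hcont.continuousAt
    have h2 := hd.tendsto_slope_zero_right
    have h3 : Tendsto (fun n : ℕ => ((n : ℝ) + 1)⁻¹) atTop (𝓝[>] 0) := by
      refine tendsto_nhdsWithin_iff.2 ⟨?_, Eventually.of_forall fun n => ?_⟩
      · simpa using tendsto_one_div_add_atTop_nhds_zero_nat (𝕜 := ℝ)
      · show (0 : ℝ) < _
        positivity
    refine (h2.comp h3).congr fun n => ?_
    simp
  have hDint : ∀ n, ∫ s in a..t, D n s =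
      ((n : ℝ) + 1) • (∫ s in t..t + ((n : ℝ) + 1)⁻¹, γ s)
       - ((n : ℝ) + 1) • ∫ s in a..a + ((n : ℝ) + 1)⁻¹, γ s := by
    intro n
    simp only [D]
    have hi : ∀ u v, IntervalIntegrable γ volume u v := fun u v => hcont.intervalIntegrable u v
    rw [intervalIntegral.integral_smul, intervalIntegral.integral_sub
      ((by fun_prop : Continuous fun s => γ (s + ((n : ℝ) + 1)⁻¹)).intervalIntegrable _ _) (hi _ _),
      intervalIntegral.integral_comp_add_right, ← smul_sub]
    congr 1
    have i1 := intervalIntegral.integral_add_adjacent_intervals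
      (hi a (a + ((n : ℝ) + 1)⁻¹)) (hi (a + ((n : ℝ) + 1)⁻¹) (t + ((n : ℝ) + 1)⁻¹))
    have i2 := intervalIntegral.integral_add_adjacent_intervals
      (hi a t) (hi t (t + ((n : ℝ) + 1)⁻¹))
    rw [sub_eq_sub_iff_add_eq_add, add_comm, i1, ← i2, add_comm]
  have hlim : Tendsto (fun n => ∫ s in a..t, D n s) U (𝓝 (γ t - γ a)) := by
    simp_rw [hDint]
    exact ((hF t).sub (hF a)).mono_left hU
  have key : ∫ s in a..t, (g : ℝ → H) s = γ t - γ a := by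
    refine ext_inner_left ℝ fun e => ?_
    have hfin : μ (Ioc a t) ≠ ∞ := measure_ne_top _ _
    have e1 : ∀ G : Lp H 2 μ, ⟪G, indicatorConstLp 2 measurableSet_Ioc hfin e⟫ =
        ⟪e, ∫ s in a..t, (G : ℝ → H) s⟫ := by
      intro G
      rw [real_inner_comm, L2.inner_indicatorConstLp_eq_inner_setIntegral ℝ, hres,
        intervalIntegral.integral_of_le ht.1]
    have e2 : ∀ n, ∫ s in a..t, (L n : ℝ → H) s = ∫ s in a..t, D n s := by
      intro n
      rw [intervalIntegral.integral_of_le ht.1, intervalIntegral.integral_of_le ht.1, ← hres]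
      exact integral_congr_ae (ae_restrict_of_ae (hmem n).coeFn_toLp)
    have l1 := hev (indicatorConstLp 2 measurableSet_Ioc hfin e)
    rw [← hg] at l1
    simp only [e1, e2] at l1
    have l2 : Tendsto (fun n => ⟪e, ∫ s in a..t, D n s⟫) U (𝓝 ⟪e, γ t - γ a⟫) :=
      tendsto_const_nhds.inner hlim
    exact tendsto_nhds_unique l1 l2
  rw [key]; abel

lemma ae_norm_le_of_lipschitz {γ g : ℝ → H} {K : NNReal} (hγ : LipschitzWith K γ) {a b : ℝ}
    (hab : a ≤ b) (hg : IntegrableOn g (Icc a b))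
    (h : ∀ t ∈ Icc a b, γ t = γ a + ∫ s in a..t, g s) :
    ∀ᵐ t ∂(volume.restrict (Ioc a b)), ‖g t‖ ≤ K := by
  have hi : IntervalIntegrable g volume a b :=
    (intervalIntegrable_iff_integrableOn_Icc_of_le hab).2 hg
  rw [ae_restrict_iff' measurableSet_Ioc]
  have hb : ∀ᵐ x : ℝ, x ≠ b := by simp [ae_iff, measure_singleton]
  filter_upwards [hi.ae_hasDerivAt_integral, hb] with t ht htb hmem
  have hd := ht (by rw [uIcc_of_le hab]; exact Ioc_subset_Icc_self hmem) a left_mem_uIcc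
  have hn : Icc a b ∈ 𝓝 t := Icc_mem_nhds hmem.1 (lt_of_le_of_ne hmem.2 htb)
  refine hd.le_of_lipschitzOn hn ?_
  refine LipschitzOnWith.of_dist_le_mul fun x hx y hy => ?_
  have := hγ.dist_le_mul x y
  rw [h x hx, h y hy, dist_add_left] at this
  exact this

lemma real_eq {f : H → EReal} (hf : ProperFn f) {x : H} (hx : f x ≠ ⊤) :
    f x = ((f x).toReal : EReal) := (EReal.coe_toReal hx (hf.2 x)).symm

lemma conv_real {lam : ℝ} {f : H → EReal} (hf : ProperFn f) (hc : LambdaConvex lam f)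
    {x y : H} (hx : f x ≠ ⊤) (hy : f y ≠ ⊤) {t : ℝ} (h0 : 0 ≤ t) (h1 : t ≤ 1) :
    f ((1 - t) • x + t • y) ≠ ⊤ ∧ (f ((1 - t) • x + t • y)).toReal ≤
      (1 - t) * (f x).toReal + t * (f y).toReal - lam / 2 * (t * (1 - t)) * ‖x - y‖ ^ 2 := by
  have h := hc x y t h0 h1
  rw [real_eq hf hx, real_eq hf hy] at h
  have h' : f ((1 - t) • x + t • y) ≤ (((1 - t) * (f x).toReal + t * (f y).toReal
      - lam / 2 * (t * (1 - t)) * ‖x - y‖ ^ 2 : ℝ) : EReal) := by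
    refine h.trans (le_of_eq ?_)
    push_cast
    rfl
  have hne : f ((1 - t) • x + t • y) ≠ ⊤ := ne_top_of_le_ne_top (EReal.coe_ne_top _) h'
  refine ⟨hne, ?_⟩
  rw [real_eq hf hne] at h'
  exact_mod_cast h'

lemma subdiff_mono {lam : ℝ} {f : H → EReal} (hf : ProperFn f) {x y p q : H}
    (hp : p ∈ subdiff lam f x) (hq : q ∈ subdiff lam f y) :
    lam * ‖x - y‖ ^ 2 ≤ ⟪p - q, x - y⟫ := by
  rw [subdiff_iff hf] at hp hq
  have h1 := hp.2 y hq.1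
  have h2 := hq.2 x hp.1
  rw [norm_sub_rev y x] at h1
  have e : ⟪p, y - x⟫ = - ⟪p, x - y⟫ := by rw [← neg_sub, inner_neg_right]
  rw [inner_sub_left]
  linarith

lemma exists_gradMin {lam : ℝ} {f : H → EReal} (hf : ProperFn f) {x : H}
    (h : (subdiff lam f x).Nonempty) :
    ∃ p ∈ subdiff lam f x, ∀ q ∈ subdiff lam f x, ‖p‖ ≤ ‖q‖ := by
  obtain ⟨p0, hp0⟩ := h
  have hfx : f x ≠ ⊤ := hp0.1
  have heq : subdiff lam f x = ⋂ (y : H) (_ : f y ≠ ⊤), {p : H |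
      ⟪p, y - x⟫ ≤ (f y).toReal - (f x).toReal - lam / 2 * ‖y - x‖ ^ 2} := by
    ext p
    rw [subdiff_iff hf]
    simp only [mem_iInter, mem_ofPred_eq]
    constructor
    · intro h y hy
      linarith [h.2 y hy]
    · intro h
      exact ⟨hfx, fun y hy => by linarith [h y hy]⟩
  have hcl : IsClosed (subdiff lam f x) := by
    rw [heq]
    refine isClosed_iInter fun y => isClosed_iInter fun _ => ?_
    exact isClosed_le (by fun_prop) continuous_const
  have hcv : Convex ℝ (subdiff lam f x) := by
    rw [heq]
    refine convex_iInter fun y => convex_iInter fun _ => ?_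
    intro p hp q hq s t hs ht hst
    simp only [mem_ofPred_eq] at *
    rw [inner_add_left, real_inner_smul_left, real_inner_smul_left]
    have h1 := mul_le_mul_of_nonneg_left hp hs
    have h2 := mul_le_mul_of_nonneg_left hq ht
    refine (add_le_add h1 h2).trans (le_of_eq ?_)
    rw [← add_mul, hst, one_mul]
  obtain ⟨v, hv, hmin⟩ := exists_norm_eq_iInf_of_complete_convex ⟨p0, hp0⟩ hcl.isComplete hcv 0
  refine ⟨v, hv, fun q hq => ?_⟩
  simp only [zero_sub, norm_neg] at hmin
  rw [hmin]
  exact ciInf_le (f := fun w : subdiff lam f x => ‖(w : H)‖)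
    ⟨0, by rintro _ ⟨w, rfl⟩; exact norm_nonneg _⟩ ⟨q, hq⟩

lemma gradMin_mem {lam : ℝ} {f : H → EReal} (hf : ProperFn f) {x : H}
    (h : (subdiff lam f x).Nonempty) : gradMin lam f x ∈ subdiff lam f x := by
  unfold gradMin
  rw [dif_pos (exists_gradMin hf h)]
  exact (exists_gradMin hf h).choose_spec.1

lemma gradNorm_le {lam : ℝ} {f : H → EReal} (hf : ProperFn f) {x p : H}
    (h : p ∈ subdiff lam f x) : gradNorm lam f x ≤ ENNReal.ofReal ‖p‖ := by
  unfold gradNorm gradMin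
  rw [if_pos ⟨p, h⟩, dif_pos (exists_gradMin hf ⟨p, h⟩)]
  exact ENNReal.ofReal_le_ofReal ((exists_gradMin hf ⟨p, h⟩).choose_spec.2 p h)

/-- Existence of the resolvent. -/
lemma exists_resolvent {lam : ℝ} {f : H → EReal} (hf : ProperFn f) (hc : LambdaConvex lam f)
    (hlsc : LowerSemicontinuous f) {τ : ℝ} (hτ : 0 < τ) (hadm : 0 < 1 + τ * lam)
    {x0 p0 : H} (hp0 : p0 ∈ subdiff lam f x0) (y : H) :
    ∃ x p : H, p ∈ subdiff lam f x ∧ y = x + τ • p := by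
  have hp := (subdiff_iff hf).1 hp0
  obtain ⟨κ, hκ⟩ : ∃ κ, κ = lam + 1 / τ := ⟨_, rfl⟩
  have hκ0 : 0 < κ := by
    have : κ = (1 + τ * lam) / τ := by rw [hκ]; field_simp; ring
    rw [this]; positivity
  let F : H → ℝ := fun z => (f z).toReal + ‖z - y‖ ^ 2 / (2 * τ)
  -- convexity of F
  have hFc : ∀ u v : H, f u ≠ ⊤ → f v ≠ ⊤ → ∀ t : ℝ, 0 ≤ t → t ≤ 1 →
      f ((1 - t) • u + t • v) ≠ ⊤ ∧ F ((1 - t) • u + t • v) ≤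
        (1 - t) * F u + t * F v - κ / 2 * (t * (1 - t)) * ‖u - v‖ ^ 2 := by
    intro u v hu hv t h0 h1
    obtain ⟨h2, h3⟩ := conv_real hf hc hu hv h0 h1
    refine ⟨h2, ?_⟩
    have e : ‖(1 - t) • u + t • v - y‖ ^ 2 =
        (1 - t) * ‖u - y‖ ^ 2 + t * ‖v - y‖ ^ 2 - t * (1 - t) * ‖u - v‖ ^ 2 := by
      have e1 : (1 - t) • u + t • v - y = (1 - t) • (u - y) + t • (v - y) := by module
      have e2 : u - v = (u - y) - (v - y) := by abel
      rw [e1, e2, norm_add_sq_real, norm_sub_sq_real (u - y) (v - y), norm_smul, norm_smul, real_inner_smul_left,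
        real_inner_smul_right, mul_pow, mul_pow, Real.norm_eq_abs, Real.norm_eq_abs, sq_abs, sq_abs]
      ring
    simp only [F]
    rw [e, hκ]
    have e3 : ((1 - t) * ‖u - y‖ ^ 2 + t * ‖v - y‖ ^ 2 - t * (1 - t) * ‖u - v‖ ^ 2) / (2 * τ) =
      (1 - t) * (‖u - y‖ ^ 2 / (2 * τ)) + t * (‖v - y‖ ^ 2 / (2 * τ))
        - (1 / τ) / 2 * (t * (1 - t)) * ‖u - v‖ ^ 2 := by
      field_simp
    rw [e3]
    linarith
  -- lower bound
  let S : Set ℝ := F '' {z | f z ≠ ⊤}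
  have hSn : S.Nonempty := ⟨_, x0, hp.1, rfl⟩
  have hSb : BddBelow S := by
    refine ⟨(f x0).toReal + ‖y - x0‖ ^ 2 / (2 * τ) - ‖p0 - (1 / τ) • (y - x0)‖ ^ 2 / (2 * κ), ?_⟩
    rintro _ ⟨z, hz, rfl⟩
    have h1 := hp.2 z hz
    simp only [F]
    have e1 : z - y = (z - x0) - (y - x0) := by abel
    rw [e1]
    generalize z - x0 = w at *
    generalize y - x0 = d at *
    have h2 : 0 ≤ ‖κ • w + (p0 - (1 / τ) • d)‖ ^ 2 := by positivity
    rw [norm_add_sq_real, norm_smul, Real.norm_of_nonneg hκ0.le, real_inner_smul_left,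
      inner_sub_right, real_inner_smul_right, mul_pow, real_inner_comm] at h2
    rw [norm_sub_sq_real w d]
    have h3 : 0 ≤ (κ ^ 2 * ‖w‖ ^ 2 + 2 * (κ * (⟪p0, w⟫ - 1 / τ * ⟪w, d⟫))
      + ‖p0 - (1 / τ) • d‖ ^ 2) / (2 * κ) := by positivity
    have e4 : (κ ^ 2 * ‖w‖ ^ 2 + 2 * (κ * (⟪p0, w⟫ - 1 / τ * ⟪w, d⟫))
      + ‖p0 - (1 / τ) • d‖ ^ 2) / (2 * κ) = κ / 2 * ‖w‖ ^ 2 + (⟪p0, w⟫ - 1 / τ * ⟪w, d⟫)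
        + ‖p0 - (1 / τ) • d‖ ^ 2 / (2 * κ) := by
      field_simp
    rw [e4] at h3
    have e5 : (‖w‖ ^ 2 - 2 * ⟪w, d⟫ + ‖d‖ ^ 2) / (2 * τ) =
        1 / τ / 2 * ‖w‖ ^ 2 - 1 / τ * ⟪w, d⟫ + ‖d‖ ^ 2 / (2 * τ) := by
      field_simp
    rw [e5]
    have e6 : κ / 2 * ‖w‖ ^ 2 = lam / 2 * ‖w‖ ^ 2 + 1 / τ / 2 * ‖w‖ ^ 2 := by rw [hκ]; ring
    linarith
  obtain ⟨m, hm⟩ : ∃ m, m = sInf S := ⟨_, rfl⟩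
  have hml : ∀ z, f z ≠ ⊤ → m ≤ F z := fun z hz => hm ▸ csInf_le hSb ⟨z, hz, rfl⟩
  have hseq : ∀ n : ℕ, ∃ z, f z ≠ ⊤ ∧ F z < m + 1 / ((n : ℝ) + 1) := by
    intro n
    have : sInf S < m + 1 / ((n : ℝ) + 1) := by
      rw [← hm]; linarith [(by positivity : (0 : ℝ) < 1 / ((n : ℝ) + 1))]
    obtain ⟨_, ⟨z, hz, rfl⟩, h⟩ := exists_lt_of_csInf_lt hSn this
    exact ⟨z, hz, h⟩
  choose z hzD hzF using hseq
  have hdist : ∀ n k, ‖z n - z k‖ ^ 2 ≤ 4 / κ * (1 / ((n : ℝ) + 1) + 1 / ((k : ℝ) + 1)) := by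
    intro n k
    obtain ⟨h1, h2⟩ := hFc (z n) (z k) (hzD n) (hzD k) (1 / 2) (by norm_num) (by norm_num)
    have h3 := hml _ h1
    have h4 := hzF n
    have h5 := hzF k
    rw [div_mul_eq_mul_div, le_div_iff₀ hκ0]
    linarith
  have hlim0 : Tendsto (fun n : ℕ => 1 / ((n : ℝ) + 1)) atTop (𝓝 0) :=
    tendsto_one_div_add_atTop_nhds_zero_nat
  have hcau : CauchySeq z := by
    refine cauchySeq_of_le_tendsto_0 (fun N : ℕ => √(8 / κ * (1 / ((N : ℝ) + 1)))) ?_ ?_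
    · intro n k N hn hk
      rw [dist_eq_norm]
      refine Real.le_sqrt_of_sq_le ((hdist n k).trans ?_)
      have a1 : 1 / ((n : ℝ) + 1) ≤ 1 / ((N : ℝ) + 1) := by gcongr
      have a2 : 1 / ((k : ℝ) + 1) ≤ 1 / ((N : ℝ) + 1) := by gcongr
      calc 4 / κ * (1 / ((n : ℝ) + 1) + 1 / ((k : ℝ) + 1))
          ≤ 4 / κ * (1 / ((N : ℝ) + 1) + 1 / ((N : ℝ) + 1)) := by gcongr
        _ = 8 / κ * (1 / ((N : ℝ) + 1)) := by ring
    · have := (Real.continuous_sqrt.tendsto _).comp (hlim0.const_mul (8 / κ))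
      simpa [Function.comp_def] using this
  obtain ⟨x, hx⟩ := cauchySeq_tendsto_of_complete hcau
  -- value at the limit
  have hle : f x ≤ ((m - ‖x - y‖ ^ 2 / (2 * τ) : ℝ) : EReal) := by
    by_contra hcon
    push Not at hcon
    obtain ⟨c, hc1, hc2⟩ := EReal.lt_iff_exists_real_btwn.1 hcon
    have hc1' : m - ‖x - y‖ ^ 2 / (2 * τ) < c := by exact_mod_cast hc1
    have hev := hx.eventually (hlsc x c hc2)
    have hq : Tendsto (fun n : ℕ => m + 1 / ((n : ℝ) + 1) - ‖z n - y‖ ^ 2 / (2 * τ)) atTop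
        (𝓝 (m + 0 - ‖x - y‖ ^ 2 / (2 * τ))) :=
      (hlim0.const_add m).sub ((((hx.sub_const y).norm).pow 2).div_const _)
    rw [add_zero] at hq
    obtain ⟨n, hn1, hn2⟩ := (hev.and (hq.eventually (gt_mem_nhds hc1'))).exists
    rw [real_eq hf (hzD n)] at hn1
    have hn1' : c < (f (z n)).toReal := by exact_mod_cast hn1
    have := hzF n
    simp only [F] at this
    linarith
  have hxD : f x ≠ ⊤ := ne_top_of_le_ne_top (EReal.coe_ne_top _) hle
  have hxm : F x ≤ m := by
    rw [real_eq hf hxD] at hle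
    have : (f x).toReal ≤ m - ‖x - y‖ ^ 2 / (2 * τ) := by exact_mod_cast hle
    simp only [F]; linarith
  refine ⟨x, (1 / τ) • (y - x), ?_, ?_⟩
  · rw [subdiff_iff hf]
    refine ⟨hxD, fun v hv => ?_⟩
    -- strong minimality
    have hstrong : F x + κ / 2 * ‖x - v‖ ^ 2 ≤ F v := by
      have ht : ∀ t : ℝ, t ∈ Ioo (0 : ℝ) 1 → κ / 2 * (1 - t) * ‖x - v‖ ^ 2 ≤ F v - F x := by
        intro t ht
        obtain ⟨h1, h2⟩ := hFc x v hxD hv t ht.1.le ht.2.le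
        have h3 := hxm.trans (hml _ h1)
        have h4 : t * (κ / 2 * (1 - t) * ‖x - v‖ ^ 2) ≤ t * (F v - F x) := by linarith
        exact le_of_mul_le_mul_left h4 ht.1
      have hl : Tendsto (fun t : ℝ => κ / 2 * (1 - t) * ‖x - v‖ ^ 2) (𝓝[>] 0)
          (𝓝 (κ / 2 * (1 - 0) * ‖x - v‖ ^ 2)) :=
        (Continuous.tendsto (by fun_prop) 0).mono_left nhdsWithin_le_nhds
      have := le_of_tendsto hl (by
        filter_upwards [Ioo_mem_nhdsGT (zero_lt_one' ℝ)] with t h using ht t h)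
      linarith
    simp only [F] at hstrong
    have e1 : v - y = (v - x) - (y - x) := by abel
    rw [e1, norm_sub_rev x y, norm_sub_rev x v, norm_sub_sq_real (v - x) (y - x), hκ] at hstrong
    rw [real_inner_smul_left, real_inner_comm]
    have e5 : (‖v - x‖ ^ 2 - 2 * ⟪v - x, y - x⟫ + ‖y - x‖ ^ 2) / (2 * τ) =
        1 / τ / 2 * ‖v - x‖ ^ 2 - 1 / τ * ⟪v - x, y - x⟫ + ‖y - x‖ ^ 2 / (2 * τ) := by
      field_simp
    rw [e5] at hstrong
    linarith
  · rw [smul_smul, mul_one_div_cancel hτ.ne', one_smul]; abel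

lemma resolvent_bounds {lam : ℝ} {f : H → EReal} (hf : ProperFn f) {τ : ℝ} (hτ : 0 < τ)
    (hh : 1 / 2 ≤ 1 + τ * lam) {x y p q : H}
    (hp : p ∈ subdiff lam f x) (hq : q ∈ subdiff lam f y) :
    ‖x - y‖ ≤ 2 * ‖(x + τ • p) - (y + τ • q)‖ ∧
    τ ^ 2 * ‖p - q‖ ^ 2 ≤ ‖(x + τ • p) - (y + τ • q)‖ ^ 2 := by
  have hm := subdiff_mono hf hp hq
  have e : (x + τ • p) - (y + τ • q) = (x - y) + τ • (p - q) := by module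
  rw [e]
  generalize x - y = u at *
  generalize p - q = P at *
  have hm' : τ * (lam * ‖u‖ ^ 2) ≤ τ * ⟪P, u⟫ := by gcongr
  constructor
  · have h1 : ⟪u + τ • P, u⟫ ≤ ‖u + τ • P‖ * ‖u‖ := real_inner_le_norm _ _
    rw [inner_add_left, real_inner_smul_left, real_inner_self_eq_norm_sq] at h1
    have h2 : ‖u‖ * ‖u‖ ≤ (2 * ‖u + τ • P‖) * ‖u‖ := by nlinarith [sq_nonneg ‖u‖]
    by_cases hu : ‖u‖ = 0
    · rw [hu]; positivity
    · exact le_of_mul_le_mul_right h2 (lt_of_le_of_ne (norm_nonneg _) (Ne.symm hu))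
  · rw [norm_add_sq_real, norm_smul, Real.norm_of_nonneg hτ.le, real_inner_smul_right,
      real_inner_comm]
    nlinarith [sq_nonneg ‖u‖]

/-- the interpolation lemma. -/
theorem statement16 (lam : ℝ) (f : H → EReal)
    (hf : ProperFn f) (hconv : LambdaConvex lam f) (hlsc : LowerSemicontinuous f)
    (τ : ℝ) (hτ : 0 < τ) (hadm : 0 < 1 + τ * lam) (hb : (1 + τ * lam)⁻¹ ≤ 2)
    (δ : ℝ) (hδ : 0 < δ) (x0 xδ : H)
    (h0 : (subdiff lam f x0).Nonempty) (h1 : (subdiff lam f xδ).Nonempty) :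
    GammaInf lam f δ x0 xδ ≤ ENNReal.ofReal
      (2 * δ * min (‖gradMin lam f x0‖ ^ 2) (‖gradMin lam f xδ‖ ^ 2)
        + (40 / δ + 12 * δ / τ ^ 2) * ‖xδ - x0‖ ^ 2
        + (12 * δ + 40 * τ ^ 2 / δ) * ‖gradMin lam f xδ - gradMin lam f x0‖ ^ 2) := by
  have hh : 1 / 2 ≤ 1 + τ * lam := by
    rw [inv_le_comm₀ hadm (by norm_num)] at hb
    linarith
  have hv0 := gradMin_mem hf h0
  have hv1 := gradMin_mem hf h1
  generalize gradMin lam f x0 = v0 at *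
  generalize gradMin lam f xδ = v1 at *
  choose J P hJ hY using exists_resolvent hf hconv hlsc hτ hadm hv0
  obtain ⟨Δ, hΔ⟩ : ∃ Δ, Δ = (xδ + τ • v1) - (x0 + τ • v0) := ⟨_, rfl⟩
  let Y : ℝ → H := fun t => (x0 + τ • v0) + (t / δ) • Δ
  have hJu : ∀ x v, v ∈ subdiff lam f x → J (x + τ • v) = x := by
    intro x v hv
    have := (resolvent_bounds hf hτ hh (hJ (x + τ • v)) hv).1
    rw [← hY, sub_self, norm_zero, mul_zero] at this
    exact sub_eq_zero.1 (norm_le_zero_iff.1 this)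
  have hK0 : 0 ≤ 2 / δ * ‖Δ‖ := by positivity
  have hlip : LipschitzWith ⟨2 / δ * ‖Δ‖, hK0⟩ (fun t => J (Y t)) := by
    refine LipschitzWith.of_dist_le_mul fun s t => ?_
    have := (resolvent_bounds hf hτ hh (hJ (Y s)) (hJ (Y t))).1
    rw [← hY, ← hY] at this
    have e : Y s - Y t = ((s - t) / δ) • Δ := by simp only [Y, sub_div]; module
    rw [e, norm_smul, norm_div, Real.norm_of_nonneg hδ.le] at this
    rw [dist_eq_norm, dist_eq_norm]
    refine this.trans (le_of_eq ?_)
    show _ = 2 / δ * ‖Δ‖ * _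
    ring
  have hg0 : J (Y 0) = x0 := by
    have : Y 0 = x0 + τ • v0 := by simp [Y]
    rw [this, hJu _ _ hv0]
  have hg1 : J (Y δ) = xδ := by
    have : Y δ = xδ + τ • v1 := by simp only [Y, div_self hδ.ne', hΔ]; module
    rw [this, hJu _ _ hv1]
  have hac := isACCurve_of_lipschitz hlip 0 δ
  have hgb := ae_norm_le_of_lipschitz hlip hδ.le hac.choose_spec.1 hac.choose_spec.2
  have hsq : ∀ a v : H, ‖a‖ ^ 2 ≤ 2 * ‖v‖ ^ 2 + 2 * ‖a - v‖ ^ 2 := by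
    intro a v
    have h1 : ‖a‖ ≤ ‖v‖ + ‖a - v‖ := by
      simpa using norm_add_le v (a - v)
    nlinarith [norm_nonneg a, sq_nonneg (‖v‖ - ‖a - v‖)]
  have hPb : ∀ t ∈ Ioc 0 δ, ‖P (Y t)‖ ^ 2 ≤
      2 * min (‖v0‖ ^ 2) (‖v1‖ ^ 2) + 2 * (‖Δ‖ ^ 2 / τ ^ 2) := by
    intro t ht
    have ht1 : t / δ ≤ 1 := (div_le_one hδ).2 ht.2
    have ht0 : 0 ≤ t / δ := div_nonneg ht.1.le hδ.le
    have gen : ∀ x v, v ∈ subdiff lam f x → ‖Y t - (x + τ • v)‖ ≤ ‖Δ‖ →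
        ‖P (Y t)‖ ^ 2 ≤ 2 * ‖v‖ ^ 2 + 2 * (‖Δ‖ ^ 2 / τ ^ 2) := by
      intro x v hv hle
      have h1 := (resolvent_bounds hf hτ hh (hJ (Y t)) hv).2
      rw [← hY] at h1
      have h2 : ‖P (Y t) - v‖ ^ 2 ≤ ‖Δ‖ ^ 2 / τ ^ 2 := by
        rw [le_div_iff₀ (by positivity), mul_comm]
        exact h1.trans (by gcongr)
      linarith [hsq (P (Y t)) v]
    have g0 := gen x0 v0 hv0 (by
      have : Y t - (x0 + τ • v0) = (t / δ) • Δ := by simp only [Y]; abel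
      rw [this, norm_smul, Real.norm_of_nonneg ht0]
      exact mul_le_of_le_one_left (norm_nonneg _) ht1)
    have g1 := gen xδ v1 hv1 (by
      have : Y t - (xδ + τ • v1) = -((1 - t / δ) • Δ) := by
        simp only [Y]
        rw [sub_smul, one_smul]
        nth_rw 2 [hΔ]
        abel
      rw [this, norm_neg, norm_smul, Real.norm_of_nonneg (by linarith)]
      exact mul_le_of_le_one_left (norm_nonneg _) (by linarith))
    rcases min_choice (‖v0‖ ^ 2) (‖v1‖ ^ 2) with h | h <;> rw [h] <;> assumption
  obtain ⟨C, hC⟩ : ∃ C, C = (2 / δ * ‖Δ‖) ^ 2 +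
      (2 * min (‖v0‖ ^ 2) (‖v1‖ ^ 2) + 2 * (‖Δ‖ ^ 2 / τ ^ 2)) := ⟨_, rfl⟩
  have hact : actionFn lam f 0 δ (fun t => J (Y t)) ≤ ENNReal.ofReal C * ENNReal.ofReal δ := by
    unfold actionFn
    rw [dif_pos hac]
    calc _ ≤ ∫⁻ t in Ioc 0 δ, ENNReal.ofReal C := by
          refine lintegral_mono_ae ?_
          filter_upwards [hgb, ae_restrict_mem measurableSet_Ioc] with t h1 h2
          have a1 : ‖hac.choose t‖ ^ 2 ≤ (2 / δ * ‖Δ‖) ^ 2 :=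
            pow_le_pow_left₀ (norm_nonneg _) h1 2
          have a2 : gradNorm lam f (J (Y t)) ^ 2 ≤ ENNReal.ofReal (‖P (Y t)‖ ^ 2) := by
            rw [ENNReal.ofReal_pow (norm_nonneg _)]
            gcongr
            exact gradNorm_le hf (hJ (Y t))
          refine (add_le_add le_rfl a2).trans ?_
          rw [← ENNReal.ofReal_add (by positivity) (by positivity), hC]
          exact ENNReal.ofReal_le_ofReal (add_le_add a1 (hPb t h2))
      _ = _ := by simp
  refine (iInf₂_le (fun t => J (Y t)) ⟨hg0, hg1⟩).trans (hact.trans ?_)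
  have hmin : 0 ≤ min (‖v0‖ ^ 2) (‖v1‖ ^ 2) := le_min (by positivity) (by positivity)
  rw [← ENNReal.ofReal_mul (by rw [hC]; positivity)]
  refine ENNReal.ofReal_le_ofReal ?_
  have hΔ2 : ‖Δ‖ ^ 2 ≤ 2 * ‖xδ - x0‖ ^ 2 + 2 * (τ ^ 2 * ‖v1 - v0‖ ^ 2) := by
    have h := hsq Δ (xδ - x0)
    have e : Δ - (xδ - x0) = τ • (v1 - v0) := by rw [hΔ]; module
    rw [e, norm_smul, Real.norm_of_nonneg hτ.le, mul_pow] at h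
    exact h
  generalize min (‖v0‖ ^ 2) (‖v1‖ ^ 2) = M at *
  have e1 : C * δ = 2 * δ * M + (4 / δ + 2 * δ / τ ^ 2) * ‖Δ‖ ^ 2 := by
    rw [hC]; field_simp; ring
  have e2 : (4 / δ + 2 * δ / τ ^ 2) * ‖Δ‖ ^ 2 ≤ (4 / δ + 2 * δ / τ ^ 2) *
      (2 * ‖xδ - x0‖ ^ 2 + 2 * (τ ^ 2 * ‖v1 - v0‖ ^ 2)) := by gcongr
  have e3 : (40 / δ + 12 * δ / τ ^ 2) * ‖xδ - x0‖ ^ 2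
      + (12 * δ + 40 * τ ^ 2 / δ) * ‖v1 - v0‖ ^ 2 - (4 / δ + 2 * δ / τ ^ 2) *
      (2 * ‖xδ - x0‖ ^ 2 + 2 * (τ ^ 2 * ‖v1 - v0‖ ^ 2)) =
      (32 / δ + 8 * δ / τ ^ 2) * ‖xδ - x0‖ ^ 2 + (8 * δ + 32 * τ ^ 2 / δ) * ‖v1 - v0‖ ^ 2 := by
    field_simp; ring
  have e4 : 0 ≤ (32 / δ + 8 * δ / τ ^ 2) * ‖xδ - x0‖ ^ 2
      + (8 * δ + 32 * τ ^ 2 / δ) * ‖v1 - v0‖ ^ 2 := by positivity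
  linarith

end
end
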